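/- arXiv:2109.01357 — 2 statements merged into one kernel-verified Lean document; each statement's English description precedes it below -/
import Mathlib

section
/- Let G and H be finite digraphs such that: (1) ∃ has a winning strategy in the modified infinitely long (c+3)-colour colouring game on (G,H), in which ∀ can additionally win at a position (g,h) if there are palettes π, π' such that every pair from π^g × π'^g is an edge but not every pair from π^h × π'^h is an edge, or vice versa; (2) every partial embedding of H into itself of size two extends to an automorphism of H; and (3) there is no embedding of G into H. Then the class RRA of representable relation algebras is not the class of models of any first-order theory in the language of relation algebras using only the variables x_0,...,x_{c-1}. -/
/-! ## Binary structures -/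

/-- A binary structure: a carrier set together with a family of binary relations
indexed by a signature `σ` consisting of binary predicate symbols. -/
structure BinStruct (σ : Type) : Type 1 where
  V : Type
  rel : σ → V → V → Prop

variable {σ : Type}

/-- The partial map `{(i,j),(i',j')}` is a partial homomorphism from `G` to `H`:
for all distinct elements of the domain and every binary predicate, the predicate
is preserved. -/
def PartialHom2 (G H : BinStruct σ) (i i' : G.V) (j j' : H.V) : Prop :=
  ∀ b : σ, (G.rel b i i' → H.rel b j j') ∧ (G.rel b i' i → H.rel b j' j)

/-- `f` is a (total) homomorphism from `G` to `H`. -/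
def IsHom (G H : BinStruct σ) (f : G.V → H.V) : Prop :=
  ∀ (b : σ) (u v : G.V), u ≠ v → G.rel b u v → H.rel b (f u) (f v)

/-! ## The rainbow atom structure -/

/-- Atoms of the rainbow relation algebra `B_{G,H}`. -/
inductive RbAtom (α β : Type) : Type
  | id : RbAtom α β
  | black : RbAtom α β
  | white : RbAtom α β
  | yellow : RbAtom α β
  | green (i : α) : RbAtom α β
  | red (j j' : β) : RbAtom α β

namespace RbAtom

/-- Converse of an atom: all atoms are self-converse except `(red j j')⌣ = red j' j`. -/
def conv {α β : Type} : RbAtom α β → RbAtom α β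
  | red j j' => red j' j
  | a => a

end RbAtom

/-- The generating forbidden triples (I)–(VI) of the rainbow algebra `B_{G,H}`. -/
inductive BaseForbidden (G H : BinStruct σ) :
    RbAtom G.V H.V → RbAtom G.V H.V → RbAtom G.V H.V → Prop
  | ident (a b : RbAtom G.V H.V) : a ≠ b → BaseForbidden G H .id a b
  | ggg (i i' i'' : G.V) : BaseForbidden G H (.green i) (.green i') (.green i'')
  | ggw (i i' : G.V) : BaseForbidden G H (.green i) (.green i') .white
  | yyy : BaseForbidden G H .yellow .yellow .yellow
  | yyb : BaseForbidden G H .yellow .yellow .black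
  | rrr (j₁ j₂ j₂' j₃' j₁s j₃s : H.V) : ¬(j₁ = j₁s ∧ j₂ = j₂' ∧ j₃' = j₃s) →
      BaseForbidden G H (.red j₁ j₂) (.red j₂' j₃') (.red j₁s j₃s)
  | ggr (i i' : G.V) (j j' : H.V) : ¬(i ≠ i' ∧ PartialHom2 G H i i' j j') →
      BaseForbidden G H (.green i) (.green i') (.red j j')

/-- A triple of atoms is forbidden if it is a Peircean transform of one of the
generating forbidden triples. -/
def Forbidden (G H : BinStruct σ) (a b c : RbAtom G.V H.V) : Prop :=
  ∃ x y z : RbAtom G.V H.V, BaseForbidden G H x y z ∧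
    ((a, b, c) = (x, y, z) ∨ (a, b, c) = (x.conv, z, y) ∨ (a, b, c) = (z, y.conv, x) ∨
     (a, b, c) = (y.conv, x.conv, z.conv) ∨ (a, b, c) = (y, z.conv, x.conv) ∨
     (a, b, c) = (z.conv, x, y.conv))

/-! ## The rainbow relation algebra (complex algebra of the atom structure) -/

/-- Composition in the complex algebra: `c ≤ X ; Y` iff there are `a ∈ X`, `b ∈ Y`
such that the triple `(a, b, c)` is not forbidden. -/
def rbComp (G H : BinStruct σ) (X Y : Set (RbAtom G.V H.V)) : Set (RbAtom G.V H.V) :=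
  {c | ∃ a ∈ X, ∃ b ∈ Y, ¬ Forbidden G H a b c}

/-- Converse in the complex algebra. -/
def rbConv {α β : Type} (X : Set (RbAtom α β)) : Set (RbAtom α β) :=
  {a | RbAtom.conv a ∈ X}

/-- The rainbow relation algebra `B_{G,H}` is completely representable: there is an
isomorphism onto an algebra of binary relations on some base set (with union,
complement, relational composition, converse and the identity relation) carrying
all suprema to unions. -/
def CompletelyRepresentable (G H : BinStruct σ) : Prop :=
  ∃ (X : Type) (θ : Set (RbAtom G.V H.V) → Set (X × X)),
    Function.Injective θ ∧
    (∀ S : Set (Set (RbAtom G.V H.V)), θ (⋃₀ S) = ⋃₀ (θ '' S)) ∧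
    (∀ A : Set (RbAtom G.V H.V), θ Aᶜ = θ Set.univ \ θ A) ∧
    (∀ A B : Set (RbAtom G.V H.V),
        θ (rbComp G H A B) = {p : X × X | ∃ z : X, (p.1, z) ∈ θ A ∧ (z, p.2) ∈ θ B}) ∧
    (∀ A : Set (RbAtom G.V H.V), θ (rbConv A) = {p : X × X | (p.2, p.1) ∈ θ A}) ∧
    θ {RbAtom.id} = {p : X × X | p.1 = p.2}

/-! ## The colouring game -/

/-- The set of vertices coloured (according to the interpretation `g`) with exactly
the colours in a palette `π`. -/
def PaletteSet {V : Type} {c : ℕ} (g : Fin c → Set V) (π : Set (Fin c)) : Set V :=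
  {x | ∀ t : Fin c, x ∈ g t ↔ t ∈ π}

/-- The position `(g,h)` of the `c`-colour colouring game on `(G,H)` is an immediate
win for ∀: (C1) some palette is realised in exactly one of the two structures, or
(C2) some pair of palettes and binary predicate produce a nonempty intersection in
exactly one of the two structures. -/
def ColWin (G H : BinStruct σ) (c : ℕ)
    (g : Fin c → Set G.V) (h : Fin c → Set H.V) : Prop :=
  (∃ π : Set (Fin c), Xor' (PaletteSet g π = ∅) (PaletteSet h π = ∅)) ∨
  (∃ (π π' : Set (Fin c)) (b : σ),
      Xor' ((PaletteSet g π ×ˢ PaletteSet g π') ∩ {q | G.rel b q.1 q.2} = ∅)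
           ((PaletteSet h π ×ˢ PaletteSet h π') ∩ {q | H.rel b q.1 q.2} = ∅))

/-- `∃` has a winning strategy in the infinitely long `c`-colour colouring game
`G^c_ω(G,H)` starting from the position `(g,h)`: there is an invariant family of safe
positions containing `(g,h)`, avoiding wins for `∀`, such that every move of `∀`
(a colour together with a set of vertices of either structure) has a response by `∃`
(a set of vertices of the other structure) staying in the family. -/
def ExSurvives (G H : BinStruct σ) (c : ℕ)
    (g : Fin c → Set G.V) (h : Fin c → Set H.V) : Prop :=
  ∃ Inv : (Fin c → Set G.V) → (Fin c → Set H.V) → Prop,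
    Inv g h ∧
    (∀ g' h', Inv g' h' → ¬ ColWin G H c g' h') ∧
    (∀ g' h', Inv g' h' → ∀ (t : Fin c) (S : Set G.V), ∃ T : Set H.V,
        Inv (Function.update g' t S) (Function.update h' t T)) ∧
    (∀ g' h', Inv g' h' → ∀ (t : Fin c) (T : Set H.V), ∃ S : Set G.V,
        Inv (Function.update g' t S) (Function.update h' t T))

/-- `∀` can force a win in the colouring game from the position `(g,h)`:
either the position is already a win for him, or he has a move such that
every response of `∃` leads to a position from which he can force a win. -/
inductive AllForcesWin (G H : BinStruct σ) (c : ℕ) :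
    (Fin c → Set G.V) → (Fin c → Set H.V) → Prop
  | now (g h) : ColWin G H c g h → AllForcesWin G H c g h
  | moveG (g h) (t : Fin c) (S : Set G.V) :
      (∀ T : Set H.V,
        AllForcesWin G H c (Function.update g t S) (Function.update h t T)) →
      AllForcesWin G H c g h
  | moveH (g h) (t : Fin c) (T : Set H.V) :
      (∀ S : Set G.V,
        AllForcesWin G H c (Function.update g t S) (Function.update h t T)) →
      AllForcesWin G H c g h

/-! ## Relation algebras, terms and formulas -/

/-- A relation algebra (Tarski's axioms): a Boolean algebra with an associative,
additive composition `;` with two-sided identity `1'`, and an additive involutive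
converse satisfying the Peircean/Tarski axioms. -/
class RelationAlgebra (A : Type) extends BooleanAlgebra A where
  comp : A → A → A
  conv : A → A
  one' : A
  comp_assoc : ∀ x y z : A, comp (comp x y) z = comp x (comp y z)
  comp_one' : ∀ x : A, comp x one' = x
  one'_comp : ∀ x : A, comp one' x = x
  sup_comp : ∀ x y z : A, comp (x ⊔ y) z = comp x z ⊔ comp y z
  comp_sup : ∀ x y z : A, comp x (y ⊔ z) = comp x y ⊔ comp x z
  conv_conv : ∀ x : A, conv (conv x) = x
  conv_sup : ∀ x y : A, conv (x ⊔ y) = conv x ⊔ conv y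
  conv_comp : ∀ x y : A, conv (comp x y) = comp (conv y) (conv x)
  tarski : ∀ x y : A, comp (conv x) (comp x y)ᶜ ⊓ y = ⊥

/-- A relation algebra is representable (a member of RRA) if it is isomorphic to a
subalgebra of an algebra of binary relations on some base set, with union,
complement, relational composition, converse and the identity relation. -/
def Representable (A : Type) [RelationAlgebra A] : Prop :=
  ∃ (X : Type) (θ : A → Set (X × X)),
    Function.Injective θ ∧
    (∀ a b : A, θ (a ⊔ b) = θ a ∪ θ b) ∧
    (∀ a : A, θ aᶜ = θ ⊤ \ θ a) ∧
    (∀ a b : A, θ (RelationAlgebra.comp a b) =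
        {p : X × X | ∃ z : X, (p.1, z) ∈ θ a ∧ (z, p.2) ∈ θ b}) ∧
    (∀ a : A, θ (RelationAlgebra.conv a) = {p : X × X | (p.2, p.1) ∈ θ a}) ∧
    θ RelationAlgebra.one' = {p : X × X | p.1 = p.2}

/-- A signature of relation-algebra operations on a carrier `A` (used to interpret
relation-algebra terms both in abstract relation algebras and in the concrete
rainbow complex algebras). -/
structure RAOps (A : Type) where
  bot : A
  top : A
  one' : A
  sup : A → A → A
  inf : A → A → A
  compl : A → A
  comp : A → A → A
  conv : A → A

/-- The operations of an abstract relation algebra. -/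
def RAOps.ofClass (A : Type) [RelationAlgebra A] : RAOps A :=
  ⟨⊥, ⊤, RelationAlgebra.one', (· ⊔ ·), (· ⊓ ·), (·ᶜ), RelationAlgebra.comp,
    RelationAlgebra.conv⟩

/-- The operations of the rainbow complex algebra `B_{G,H}`. -/
def rbOps (G H : BinStruct σ) : RAOps (Set (RbAtom G.V H.V)) :=
  ⟨∅, Set.univ, {RbAtom.id}, (· ∪ ·), (· ∩ ·), (·ᶜ), rbComp G H, rbConv⟩

/-- Terms in the language of relation algebras with variables `x_0, …, x_{c-1}`. -/
inductive RATerm (c : ℕ) : Type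
  | var (i : Fin c) : RATerm c
  | bot : RATerm c
  | top : RATerm c
  | one' : RATerm c
  | sup (s t : RATerm c) : RATerm c
  | inf (s t : RATerm c) : RATerm c
  | compl (t : RATerm c) : RATerm c
  | comp (s t : RATerm c) : RATerm c
  | conv (t : RATerm c) : RATerm c

namespace RATerm

variable {c : ℕ} {A : Type}

/-- Evaluation of a term under a total assignment of the variables. -/
def eval (ops : RAOps A) (v : Fin c → A) : RATerm c → A
  | var i => v i
  | bot => ops.bot
  | top => ops.top
  | one' => ops.one'
  | sup s t => ops.sup (s.eval ops v) (t.eval ops v)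
  | inf s t => ops.inf (s.eval ops v) (t.eval ops v)
  | compl t => ops.compl (t.eval ops v)
  | comp s t => ops.comp (s.eval ops v) (t.eval ops v)
  | conv t => ops.conv (t.eval ops v)

/-- Evaluation of a term under a partial assignment of the variables; defined
just when every variable of the term lies in the domain of the assignment. -/
def evalo (ops : RAOps A) (v : Fin c → Option A) : RATerm c → Option A
  | var i => v i
  | bot => some ops.bot
  | top => some ops.top
  | one' => some ops.one'
  | sup s t => (s.evalo ops v).bind fun a => (t.evalo ops v).map fun b => ops.sup a b
  | inf s t => (s.evalo ops v).bind fun a => (t.evalo ops v).map fun b => ops.inf a b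
  | compl t => (t.evalo ops v).map ops.compl
  | comp s t => (s.evalo ops v).bind fun a => (t.evalo ops v).map fun b => ops.comp a b
  | conv t => (t.evalo ops v).map ops.conv

/-- The variables occurring in a term. -/
def vars : RATerm c → Finset (Fin c)
  | var i => {i}
  | bot => ∅
  | top => ∅
  | one' => ∅
  | sup s t => s.vars ∪ t.vars
  | inf s t => s.vars ∪ t.vars
  | compl t => t.vars
  | comp s t => s.vars ∪ t.vars
  | conv t => t.vars

end RATerm

/-- First-order formulas in the language of relation algebras with variables
`x_0, …, x_{c-1}`. -/
inductive RAFormula (c : ℕ) : Type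
  | eq (s t : RATerm c) : RAFormula c
  | not (φ : RAFormula c) : RAFormula c
  | and (φ ψ : RAFormula c) : RAFormula c
  | ex (i : Fin c) (φ : RAFormula c) : RAFormula c

namespace RAFormula

variable {c : ℕ} {A : Type}

/-- Quantifier depth of a formula. -/
def qd : RAFormula c → ℕ
  | eq _ _ => 0
  | not φ => φ.qd
  | and φ ψ => max φ.qd ψ.qd
  | ex _ φ => φ.qd + 1

/-- Free variables of a formula. -/
def freeVars : RAFormula c → Finset (Fin c)
  | eq s t => s.vars ∪ t.vars
  | not φ => φ.freeVars
  | and φ ψ => φ.freeVars ∪ ψ.freeVars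
  | ex i φ => φ.freeVars \ {i}

/-- Satisfaction of a formula under a total assignment of the variables. -/
def Sat (ops : RAOps A) (v : Fin c → A) : RAFormula c → Prop
  | eq s t => s.eval ops v = t.eval ops v
  | not φ => ¬ Sat ops v φ
  | and φ ψ => Sat ops v φ ∧ Sat ops v ψ
  | ex i φ => ∃ a : A, Sat ops (Function.update v i a) φ

end RAFormula

/-! ## The pebble equivalence game on relation algebras -/

/-- The position `(α,β)` of the pebble game is good for `∃`: the two partial maps have
the same domain and the correspondence `t^α ↦ t^β` between the generated subalgebras
(given by evaluating terms whose variables lie in the common domain) is a well-defined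
isomorphism. -/
def GoodPos {A B : Type} (opsA : RAOps A) (opsB : RAOps B) (c : ℕ)
    (α : Fin c → Option A) (β : Fin c → Option B) : Prop :=
  (∀ i : Fin c, (α i).isSome ↔ (β i).isSome) ∧
  ∀ s t : RATerm c,
    (s.evalo opsA α = t.evalo opsA α ↔ s.evalo opsB β = t.evalo opsB β)

/-- `∃` has a winning strategy in the `c`-pebble, `n`-round equivalence game
`Γ^c_n(A, α, B, β)` (for finite `n`). -/
def ExWinsPebble {A B : Type} (opsA : RAOps A) (opsB : RAOps B) (c : ℕ) :
    ℕ → (Fin c → Option A) → (Fin c → Option B) → Prop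
  | 0, α, β => GoodPos opsA opsB c α β
  | n + 1, α, β => GoodPos opsA opsB c α β ∧
      (∀ (t : Fin c) (a : A), ∃ b : B,
        ExWinsPebble opsA opsB c n
          (Function.update α t (some a)) (Function.update β t (some b))) ∧
      (∀ (t : Fin c) (b : B), ∃ a : A,
        ExWinsPebble opsA opsB c n
          (Function.update α t (some a)) (Function.update β t (some b)))

/-- `∃` has a winning strategy in the infinitely long `c`-pebble equivalence game
`Γ^c_ω(A, α, B, β)`. -/
def ExWinsPebbleOmega {A B : Type} (opsA : RAOps A) (opsB : RAOps B) (c : ℕ)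
    (α : Fin c → Option A) (β : Fin c → Option B) : Prop :=
  ∃ Inv : (Fin c → Option A) → (Fin c → Option B) → Prop,
    Inv α β ∧
    (∀ α' β', Inv α' β' → GoodPos opsA opsB c α' β') ∧
    (∀ α' β', Inv α' β' → ∀ (t : Fin c) (a : A), ∃ b : B,
        Inv (Function.update α' t (some a)) (Function.update β' t (some b))) ∧
    (∀ α' β', Inv α' β' → ∀ (t : Fin c) (b : B), ∃ a : A,
        Inv (Function.update α' t (some a)) (Function.update β' t (some b)))

/-- `∃` has a winning strategy in the `c`-pebble, `n`-round equivalence game, where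
`n ≤ ω` (`n : ℕ∞`). -/
def ExWinsPebbleE {A B : Type} (opsA : RAOps A) (opsB : RAOps B) (c : ℕ)
    (n : ℕ∞) (α : Fin c → Option A) (β : Fin c → Option B) : Prop :=
  match n with
  | ⊤ => ExWinsPebbleOmega opsA opsB c α β
  | (m : ℕ) => ExWinsPebble opsA opsB c m α β

/-! ## The mirroring strategy -/

/-- The set of green subscripts of an element of a rainbow algebra. -/
def greenPart {V F : Type} (x : Set (RbAtom V F)) : Set V := {i | RbAtom.green i ∈ x}

/-- The element of the other rainbow algebra with the same non-green part as `x` and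
green part determined by `Y`. -/
def mirrorElt {V W F : Type} (x : Set (RbAtom V F)) (Y : Set W) : Set (RbAtom W F) :=
  fun a => match a with
  | RbAtom.green j => j ∈ Y
  | RbAtom.id => RbAtom.id ∈ x
  | RbAtom.black => RbAtom.black ∈ x
  | RbAtom.white => RbAtom.white ∈ x
  | RbAtom.yellow => RbAtom.yellow ∈ x
  | RbAtom.red j j' => RbAtom.red j j' ∈ x

/-- Inclusion of the first `c` colours into the `c+3` colours of the parallel game. -/
def liftCol {c : ℕ} (t : Fin c) : Fin (c + 3) := Fin.castLE (Nat.le_add_right c 3) t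

/-- A combined state of a play of the pebble game `Γ^c(B_{G,F}, B_{H,F})` together
with the parallel play of the colouring game `G^{c+3}_ω(G,H)`, recording also the
set of colours used so far. -/
structure MirrorState (c : ℕ) (G H F : BinStruct σ) : Type where
  α : Fin c → Option (Set (RbAtom G.V F.V))
  β : Fin c → Option (Set (RbAtom H.V F.V))
  g : Fin (c + 3) → Set G.V
  h : Fin (c + 3) → Set H.V
  used : Set (Fin (c + 3))

/-- The initial state: no pebbles placed, all vertices uncoloured, no colour used. -/
def mirrorInit (c : ℕ) (G H F : BinStruct σ) : MirrorState c G H F :=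
  ⟨fun _ => none, fun _ => none, fun _ => ∅, fun _ => ∅, ∅⟩

/-- `Inv` is a winning invariant witnessing a winning strategy for `∃` in the
colouring game `G^c_ω(G,H)` (from the initial position). -/
def IsColInvariant (G H : BinStruct σ) (c : ℕ)
    (Inv : (Fin c → Set G.V) → (Fin c → Set H.V) → Prop) : Prop :=
  Inv (fun _ => ∅) (fun _ => ∅) ∧
  (∀ g h, Inv g h → ¬ ColWin G H c g h) ∧
  (∀ g h, Inv g h → ∀ (t : Fin c) (S : Set G.V), ∃ T : Set H.V,
      Inv (Function.update g t S) (Function.update h t T)) ∧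
  (∀ g h, Inv g h → ∀ (t : Fin c) (T : Set H.V), ∃ S : Set G.V,
      Inv (Function.update g t S) (Function.update h t T))

/-- One round of the pebble game `Γ^c(B_{G,F}, B_{H,F})` in which `∃` plays the
mirroring strategy induced by the colouring-game winning strategy witnessed by the
invariant `Inv`: when `∀` plays pebble `t` on an element of one algebra, `∃` colours
the set of its green subscripts with colour `t` in the parallel colouring game,
obtains a response keeping the parallel play inside `Inv`, and answers with the
element with identical non-green part and green part determined by that response. -/
inductive MirrorStep (G H F : BinStruct σ) (c : ℕ)
    (Inv : (Fin (c + 3) → Set G.V) → (Fin (c + 3) → Set H.V) → Prop) :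
    MirrorState c G H F → MirrorState c G H F → Prop
  | fromG (s : MirrorState c G H F) (t : Fin c) (x : Set (RbAtom G.V F.V)) (Y : Set H.V) :
      Inv (Function.update s.g (liftCol t) (greenPart x))
          (Function.update s.h (liftCol t) Y) →
      MirrorStep G H F c Inv s
        ⟨Function.update s.α t (some x),
         Function.update s.β t (some (mirrorElt x Y)),
         Function.update s.g (liftCol t) (greenPart x),
         Function.update s.h (liftCol t) Y,
         insert (liftCol t) s.used⟩
  | fromH (s : MirrorState c G H F) (t : Fin c) (y : Set (RbAtom H.V F.V)) (X : Set G.V) :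
      Inv (Function.update s.g (liftCol t) X)
          (Function.update s.h (liftCol t) (greenPart y)) →
      MirrorStep G H F c Inv s
        ⟨Function.update s.α t (some (mirrorElt y X)),
         Function.update s.β t (some y),
         Function.update s.g (liftCol t) X,
         Function.update s.h (liftCol t) (greenPart y),
         insert (liftCol t) s.used⟩

/-- The states reachable in a play of the pebble game `Γ^c(B_{G,F}, B_{H,F})`
during which `∃` plays using the mirroring strategy. -/
def MirrorReachable (G H F : BinStruct σ) (c : ℕ)
    (Inv : (Fin (c + 3) → Set G.V) → (Fin (c + 3) → Set H.V) → Prop)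
    (s : MirrorState c G H F) : Prop :=
  Relation.ReflTransGen (MirrorStep G H F c Inv) (mirrorInit c G H F) s

section Digraphs


/-- A digraph: a set of vertices with a binary edge relation. -/
structure Digraph' : Type 1 where
  V : Type
  E : V → V → Prop

/-- The winning condition for ∀ in the (unmodified) colouring game on digraphs. -/
def ColWinD (G H : Digraph') (c : ℕ)
    (g : Fin c → Set G.V) (h : Fin c → Set H.V) : Prop :=
  (∃ π : Set (Fin c), Xor' (PaletteSet g π = ∅) (PaletteSet h π = ∅)) ∨
  (∃ π π' : Set (Fin c),
      Xor' ((PaletteSet g π ×ˢ PaletteSet g π') ∩ {q | G.E q.1 q.2} = ∅)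
           ((PaletteSet h π ×ˢ PaletteSet h π') ∩ {q | H.E q.1 q.2} = ∅))

/-- The winning condition for ∀ in the modified colouring game on digraphs: he can
additionally win if for some palettes every pair from `π^g × π'^g` is an edge but
not every pair from `π^h × π'^h` is an edge, or the other way round. -/
def ModColWinD (G H : Digraph') (c : ℕ)
    (g : Fin c → Set G.V) (h : Fin c → Set H.V) : Prop :=
  ColWinD G H c g h ∨
  (∃ π π' : Set (Fin c),
      Xor' (∀ p ∈ PaletteSet g π ×ˢ PaletteSet g π', G.E p.1 p.2)
           (∀ p ∈ PaletteSet h π ×ˢ PaletteSet h π', H.E p.1 p.2))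

/-- `∃` has a winning strategy in the modified infinitely long `c`-colour colouring
game on digraphs `(G,H)`, starting from the uncoloured position. -/
def ExSurvivesModD (G H : Digraph') (c : ℕ) : Prop :=
  ∃ Inv : (Fin c → Set G.V) → (Fin c → Set H.V) → Prop,
    Inv (fun _ => ∅) (fun _ => ∅) ∧
    (∀ g h, Inv g h → ¬ ModColWinD G H c g h) ∧
    (∀ g h, Inv g h → ∀ (t : Fin c) (S : Set G.V), ∃ T : Set H.V,
        Inv (Function.update g t S) (Function.update h t T)) ∧
    (∀ g h, Inv g h → ∀ (t : Fin c) (T : Set H.V), ∃ S : Set G.V,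
        Inv (Function.update g t S) (Function.update h t T))

/-- `f` is an embedding of the digraph `G` into the digraph `H`. -/
def IsDigraphEmbedding (G H : Digraph') (f : G.V → H.V) : Prop :=
  Function.Injective f ∧ ∀ u v : G.V, u ≠ v → (G.E u v ↔ H.E (f u) (f v))


/-!
A digraph `G` is read as a structure with an edge and a non-edge predicate, so that homomorphisms
are embeddings. The rainbow algebra `B_{G,H}` has atoms `green i` for the vertices `i` of `G` and
`red j j'` for the pairs of vertices of `H`. In a representation over finite `H`, take an edge
`(x, y)` with apices `z_i` such that `(x, z_i)` is `green i` and `(z_i, y)` is yellow. Only red fits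
between two apices, and the reds between them spell out a homomorphism from `G` to `H`; so `B_{G,H}`
is not representable. Conversely `B_{H,H}` is representable: a representation is built step by step,
and to label the edges from a new apex of a cone it is enough to have a homomorphism that accounts
for the reds between the old ones. Homogeneity provides one as long as there are only two apices,
and further apices are then added following it.

Finally `B_{G,H}` and `B_{H,H}` satisfy the same formulas in `c` variables. They differ in their
greens only, so an assignment of `c` elements amounts, up to atoms common to both algebras, to a
colouring of the vertices by `c` colours; the remaining three colours serve to pick vertices one at
a time when the value of a term is inspected.
-/

/-! ## Complex algebras of atom structures -/

/-- The atom structure of an atomic relation algebra whose identity is an atom: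
`tri a b c` says that the atom `c` lies below `a ; b`.  Associativity is required of
non-identity atoms only, see `AtomStructure.tri_assoc` for the rest. -/
structure AtomStructure (α : Type) where
  one : α
  conv : α → α
  tri : α → α → α → Prop
  conv_conv : ∀ a, conv (conv a) = a
  tri_one_left : ∀ a b, tri one a b ↔ a = b
  tri_conv_left : ∀ {a b c}, tri a b c → tri (conv a) c b
  tri_conv_right : ∀ {a b c}, tri a b c → tri c (conv b) a
  tri_assoc_of_ne_one : ∀ {a b c d e}, a ≠ one → b ≠ one → c ≠ one → d ≠ one →
    tri a b e → tri e c d → ∃ f, tri b c f ∧ tri a f d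

namespace AtomStructure

variable {α : Type} (S : AtomStructure α)

theorem conv_injective : Function.Injective S.conv :=
  Function.LeftInverse.injective S.conv_conv

theorem tri_conv {a b c : α} (h : S.tri a b c) : S.tri (S.conv b) (S.conv a) (S.conv c) :=
  S.tri_conv_left (S.tri_conv_right (S.tri_conv_left h))

theorem tri_one_conv_self (a : α) : S.tri a (S.conv a) S.one :=
  S.tri_conv_right ((S.tri_one_left a a).2 rfl)

theorem conv_one : S.conv S.one = S.one :=
  (S.tri_one_left _ _).1 (S.tri_one_conv_self S.one)

theorem conv_eq_one_iff {a : α} : S.conv a = S.one ↔ a = S.one := by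
  rw [← S.conv_injective.eq_iff, S.conv_conv, S.conv_one]

theorem tri_one_mid {a b : α} : S.tri a S.one b ↔ a = b := by
  refine ⟨fun h ↦ ?_, fun h ↦ ?_⟩
  · have h' := S.tri_conv h
    rw [S.conv_one, S.tri_one_left] at h'
    exact S.conv_injective h'
  · subst h
    simpa only [S.conv_conv] using S.tri_conv_left (S.tri_one_conv_self (S.conv a))

theorem tri_one_right {a b : α} : S.tri a b S.one ↔ a = S.conv b := by
  refine ⟨fun h ↦ ((S.tri_one_left _ _).1 (S.tri_conv_right h)).symm, fun h ↦ ?_⟩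
  subst h
  simpa only [S.conv_conv] using S.tri_one_conv_self (S.conv b)

theorem tri_assoc {a b c d e : α} (h₁ : S.tri a b e) (h₂ : S.tri e c d) :
    ∃ f, S.tri b c f ∧ S.tri a f d := by
  by_cases ha : a = S.one
  · subst ha
    obtain rfl := (S.tri_one_left _ _).1 h₁
    exact ⟨d, h₂, (S.tri_one_left d d).2 rfl⟩
  by_cases hb : b = S.one
  · subst hb
    obtain rfl := S.tri_one_mid.1 h₁
    exact ⟨c, (S.tri_one_left c c).2 rfl, h₂⟩
  by_cases hc : c = S.one
  · subst hc
    obtain rfl := S.tri_one_mid.1 h₂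
    exact ⟨b, S.tri_one_mid.2 rfl, h₁⟩
  by_cases hd : d = S.one
  · subst hd
    obtain rfl := S.tri_one_right.1 h₂
    refine ⟨S.conv a, ?_, S.tri_one_conv_self a⟩
    simpa only [S.conv_conv] using S.tri_conv_right (S.tri_conv_left h₁)
  exact S.tri_assoc_of_ne_one ha hb hc hd h₁ h₂

theorem tri_assoc' {a b c d f : α} (h₁ : S.tri b c f) (h₂ : S.tri a f d) :
    ∃ e, S.tri a b e ∧ S.tri e c d := by
  obtain ⟨e, he₁, he₂⟩ := S.tri_assoc (S.tri_conv h₁) (S.tri_conv h₂)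
  refine ⟨S.conv e, ?_, ?_⟩
  · simpa only [S.conv_conv] using S.tri_conv he₁
  · simpa only [S.conv_conv] using S.tri_conv he₂

/-- Composition in the complex algebra of an atom structure. -/
def comp (A B : Set α) : Set α := {c | ∃ a ∈ A, ∃ b ∈ B, S.tri a b c}

theorem comp_assoc (A B C : Set α) : S.comp (S.comp A B) C = S.comp A (S.comp B C) := by
  ext d
  constructor
  · rintro ⟨e, ⟨a, ha, b, hb, hab⟩, c, hc, hec⟩
    obtain ⟨f, hbc, haf⟩ := S.tri_assoc hab hec
    exact ⟨a, ha, f, ⟨b, hb, c, hc, hbc⟩, haf⟩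
  · rintro ⟨a, ha, f, ⟨b, hb, c, hc, hbc⟩, haf⟩
    obtain ⟨e, hab, hec⟩ := S.tri_assoc' hbc haf
    exact ⟨e, ⟨a, ha, b, hb, hab⟩, c, hc, hec⟩

theorem preimage_conv_comp (A B : Set α) :
    S.conv ⁻¹' S.comp A B = S.comp (S.conv ⁻¹' B) (S.conv ⁻¹' A) := by
  ext d
  constructor
  · rintro ⟨a, ha, b, hb, h⟩
    refine ⟨S.conv b, ?_, S.conv a, ?_, ?_⟩
    · rwa [Set.mem_preimage, S.conv_conv]
    · rwa [Set.mem_preimage, S.conv_conv]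
    · simpa only [S.conv_conv] using S.tri_conv h
  · rintro ⟨b, hb, a, ha, h⟩
    exact ⟨S.conv a, ha, S.conv b, hb, S.tri_conv h⟩

/-- The complex algebra of an atom structure: the relation algebra of all sets of atoms. -/
abbrev complexAlgebra : RelationAlgebra (Set α) where
  comp := S.comp
  conv A := S.conv ⁻¹' A
  one' := {S.one}
  comp_assoc := S.comp_assoc
  comp_one' A := by
    ext d
    simp only [comp, Set.mem_singleton_iff, exists_eq_left, Set.mem_ofPred_eq, S.tri_one_mid,
      exists_eq_right]
  one'_comp A := by
    ext d
    simp only [comp, Set.mem_singleton_iff, exists_eq_left, Set.mem_ofPred_eq, S.tri_one_left,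
      exists_eq_right]
  sup_comp A B C := by
    ext d
    simp only [comp, Set.sup_eq_union, Set.mem_union, Set.mem_ofPred_eq, or_and_right, exists_or]
  comp_sup A B C := by
    ext d
    simp only [comp, Set.sup_eq_union, Set.mem_union, Set.mem_ofPred_eq, or_and_right, and_or_left,
      exists_or]
  conv_conv A := by
    ext d
    simp only [Set.mem_preimage, S.conv_conv]
  conv_sup _ _ := Set.preimage_union
  conv_comp := S.preimage_conv_comp
  tarski _ _ :=
    Set.eq_empty_of_forall_notMem fun d ⟨⟨a, ha, b, hb, h⟩, hd⟩ ↦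
      hb ⟨S.conv a, ha, d, hd, S.tri_conv_left h⟩

/-- A representation of the complex algebra of `S` on the base set `X`. -/
structure IsRepresentation {X : Type} (θ : Set α → Set (X × X)) : Prop where
  injective : Function.Injective θ
  map_union : ∀ A B, θ (A ∪ B) = θ A ∪ θ B
  map_compl : ∀ A, θ Aᶜ = θ Set.univ \ θ A
  map_comp : ∀ A B, θ (S.comp A B) = {p | ∃ z, (p.1, z) ∈ θ A ∧ (z, p.2) ∈ θ B}
  map_conv : ∀ A, θ (S.conv ⁻¹' A) = {p | (p.2, p.1) ∈ θ A}
  map_one : θ {S.one} = {p | p.1 = p.2}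

theorem representable_iff :
    @Representable _ S.complexAlgebra ↔
      ∃ (X : Type) (θ : Set α → Set (X × X)), S.IsRepresentation θ :=
  ⟨fun ⟨X, θ, h₁, h₂, h₃, h₄, h₅, h₆⟩ ↦ ⟨X, θ, h₁, h₂, h₃, h₄, h₅, h₆⟩,
    fun ⟨X, θ, h⟩ ↦ ⟨X, θ, h.injective, h.map_union, h.map_compl, h.map_comp, h.map_conv,
      h.map_one⟩⟩

namespace IsRepresentation

variable {S} {X : Type} {θ : Set α → Set (X × X)} (hθ : S.IsRepresentation θ) {A B : Set α}
  {x y z : X}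
include hθ

theorem map_mono (h : A ⊆ B) : θ A ⊆ θ B := by
  rw [← Set.union_eq_self_of_subset_left h, hθ.map_union]
  exact Set.subset_union_left

theorem disjoint_map_compl : Disjoint (θ A) (θ Aᶜ) := by
  rw [hθ.map_compl]
  exact disjoint_sdiff_self_right

theorem map_empty : θ ∅ = ∅ := by
  exact disjoint_self.1 (hθ.disjoint_map_compl.mono_right (hθ.map_mono (Set.empty_subset ∅ᶜ)))

theorem nonempty_map (h : A.Nonempty) : (θ A).Nonempty := by
  rw [Set.nonempty_iff_ne_empty, ← hθ.map_empty, hθ.injective.ne_iff]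
  exact h.ne_empty

theorem mem_inter (hA : (x, y) ∈ θ A) (hB : (x, y) ∈ θ B) : (x, y) ∈ θ (A ∩ B) := by
  have hA' : (x, y) ∈ θ (A ∩ B) ∪ θ Bᶜ := by
    rw [← hθ.map_union]
    exact hθ.map_mono (fun a ha ↦ (em (a ∈ B)).imp (⟨ha, ·⟩) id) hA
  exact hA'.resolve_right fun h ↦ hθ.disjoint_map_compl.le_bot ⟨hB, h⟩

theorem exists_mem_singleton (hA : A.Finite) (h : (x, y) ∈ θ A) : ∃ a ∈ A, (x, y) ∈ θ {a} := by
  induction A, hA using Set.Finite.induction_on with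
  | empty => exact (hθ.map_empty ▸ h : (x, y) ∈ (∅ : Set (X × X))).elim
  | @insert a A _ _ ih =>
    rw [Set.insert_eq, hθ.map_union] at h
    rcases h with h | h
    · exact ⟨a, Set.mem_insert a A, h⟩
    · obtain ⟨b, hb, hab⟩ := ih h
      exact ⟨b, Set.mem_insert_of_mem a hb, hab⟩

theorem mem_of_mem_singleton {a : α} (ha : (x, y) ∈ θ {a}) (hA : (x, y) ∈ θ A) : a ∈ A := by
  by_contra haA
  have h := hθ.mem_inter ha hA
  rw [Set.singleton_inter_eq_empty.2 haA, hθ.map_empty] at h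
  exact h

theorem eq_of_mem_singleton {a b : α} (ha : (x, y) ∈ θ {a}) (hb : (x, y) ∈ θ {b}) : a = b :=
  Set.mem_singleton_iff.1 (hθ.mem_of_mem_singleton ha hb)

theorem conv_mem {a : α} (h : (x, y) ∈ θ {a}) : (y, x) ∈ θ {S.conv a} := by
  have hpre : S.conv ⁻¹' {S.conv a} = {a} := by
    ext b
    exact S.conv_injective.eq_iff
  rwa [← hpre, hθ.map_conv] at h

theorem mem_comp (hA : (x, y) ∈ θ A) (hB : (y, z) ∈ θ B) : (x, z) ∈ θ (S.comp A B) := by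
  rw [hθ.map_comp]
  exact ⟨y, hA, hB⟩

theorem exists_of_mem_comp (h : (x, z) ∈ θ (S.comp A B)) : ∃ y, (x, y) ∈ θ A ∧ (y, z) ∈ θ B := by
  rwa [hθ.map_comp] at h

theorem tri_of_mem {a b c : α} (ha : (x, y) ∈ θ {a}) (hb : (y, z) ∈ θ {b})
    (hc : (x, z) ∈ θ {c}) : S.tri a b c := by
  obtain ⟨a', rfl, b', rfl, h⟩ := hθ.mem_of_mem_singleton hc (hθ.mem_comp ha hb)
  exact h

end IsRepresentation

end AtomStructure

/-! ## Representations built step by step -/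

namespace AtomStructure

variable {α : Type} {S : AtomStructure α}

variable (S) in
/-- A labelling of all pairs of points of `X` by atoms that has no defects: any atoms `a`, `b`
that fit above the edge `(x, y)` are the labels of `(x, z)` and `(y, z)` for some `z`. -/
structure IsCompleteLabelling {X : Type} (M : X → X → α) : Prop where
  eq_one_iff : ∀ {x y}, M x y = S.one ↔ x = y
  tri : ∀ x y z, S.tri (M x y) (M y z) (M x z)
  exists_witness : ∀ {x y a b}, S.tri (M x y) b a → ∃ z, M x z = a ∧ M y z = b

namespace IsCompleteLabelling

variable {X : Type} {M : X → X → α}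

theorem swap (hM : S.IsCompleteLabelling M) (x y : X) : M y x = S.conv (M x y) := by
  have h := hM.tri y x y
  rwa [hM.eq_one_iff.2 rfl, S.tri_one_right] at h

theorem exists_eq (hM : S.IsCompleteLabelling M) (x : X) (a : α) : ∃ z, M x z = a := by
  have h : S.tri (M x x) a a := by rw [hM.eq_one_iff.2 rfl, S.tri_one_left]
  obtain ⟨z, hz, -⟩ := hM.exists_witness h
  exact ⟨z, hz⟩

theorem mem_comp_iff (hM : S.IsCompleteLabelling M) {A B : Set α} {x y : X} :
    M x y ∈ S.comp A B ↔ ∃ z, M x z ∈ A ∧ M z y ∈ B := by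
  constructor
  · rintro ⟨a, ha, b, hb, h⟩
    obtain ⟨z, rfl, hz⟩ := hM.exists_witness (S.tri_conv_right h)
    refine ⟨z, ha, ?_⟩
    rwa [hM.swap, hz, S.conv_conv]
  · rintro ⟨z, hA, hB⟩
    exact ⟨_, hA, _, hB, hM.tri x z y⟩

theorem isRepresentation [Nonempty X] (hM : S.IsCompleteLabelling M) :
    S.IsRepresentation fun A ↦ {p : X × X | M p.1 p.2 ∈ A} where
  injective A B h := by
    ext a
    obtain ⟨z, rfl⟩ := hM.exists_eq (Classical.arbitrary X) a
    exact Set.ext_iff.1 h (_, z)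
  map_union _ _ := rfl
  map_compl _ := Set.compl_eq_univ_sdiff _
  map_comp _ _ := Set.ext fun _ ↦ hM.mem_comp_iff
  map_conv A := by
    ext ⟨x, y⟩
    change S.conv (M x y) ∈ A ↔ M y x ∈ A
    rw [hM.swap x y]
  map_one := Set.ext fun _ ↦ hM.eq_one_iff

end IsCompleteLabelling

variable (S) in
/-- A finite consistent labelling of the nodes `0, …, size - 1`; labels of other pairs are junk. -/
structure Network where
  size : ℕ
  label : ℕ → ℕ → α
  label_eq_one_iff : ∀ {u v}, u < size → v < size → (label u v = S.one ↔ u = v)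
  tri : ∀ {u v w}, u < size → v < size → w < size →
    S.tri (label u v) (label v w) (label u w)

namespace Network

/-- Networks are ordered by extension. -/
instance : Preorder S.Network where
  le N N' := N.size ≤ N'.size ∧ ∀ u < N.size, ∀ v < N.size, N'.label u v = N.label u v
  le_refl _ := ⟨le_rfl, fun _ _ _ _ ↦ rfl⟩
  le_trans _ _ _ h h' := ⟨h.1.trans h'.1, fun u hu v hv ↦
    (h'.2 u (hu.trans_le h.1) v (hv.trans_le h.1)).trans (h.2 u hu v hv)⟩

variable {N N' : S.Network} {u v : ℕ}

theorem label_self (N : S.Network) (hu : u < N.size) : N.label u u = S.one :=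
  (N.label_eq_one_iff hu hu).2 rfl

theorem label_swap (N : S.Network) (hu : u < N.size) (hv : v < N.size) :
    N.label v u = S.conv (N.label u v) := by
  have h := N.tri hv hu hv
  rwa [N.label_self hv, S.tri_one_right] at h

/-- `N.Witnessed x y a b` says that some node `z` has `(x, z)` labelled `a` and
`(y, z)` labelled `b`. -/
def Witnessed (N : S.Network) (x y : ℕ) (a b : α) : Prop :=
  x < N.size ∧ y < N.size ∧ ∃ z < N.size, N.label x z = a ∧ N.label y z = b

/-- `N.Admits x y a b` says that a node `z` with `(x, z)` labelled `a` and `(y, z)` labelled `b`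
would be consistent with the label of `(x, y)`. -/
def Admits (N : S.Network) (x y : ℕ) (a b : α) : Prop :=
  x < N.size ∧ y < N.size ∧ S.tri (N.label x y) b a

variable {x y : ℕ} {a b : α}

theorem Witnessed.mono (h : N.Witnessed x y a b) (hN : N ≤ N') : N'.Witnessed x y a b := by
  obtain ⟨hx, hy, z, hz, rfl, rfl⟩ := h
  exact ⟨hx.trans_le hN.1, hy.trans_le hN.1, z, hz.trans_le hN.1, hN.2 x hx z hz, hN.2 y hy z hz⟩

theorem Witnessed.swap (h : N.Witnessed x y a b) : N.Witnessed y x b a := by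
  obtain ⟨hx, hy, z, hz, ha, hb⟩ := h
  exact ⟨hy, hx, z, hz, hb, ha⟩

theorem Admits.mono (h : N.Admits x y a b) (hN : N ≤ N') : N'.Admits x y a b := by
  obtain ⟨hx, hy, h⟩ := h
  refine ⟨hx.trans_le hN.1, hy.trans_le hN.1, ?_⟩
  rwa [hN.2 x hx y hy]

theorem Admits.swap (h : N.Admits x y a b) : N.Admits y x b a := by
  obtain ⟨hx, hy, h⟩ := h
  refine ⟨hy, hx, ?_⟩
  rw [N.label_swap hx hy]
  exact S.tri_conv_left h

theorem Admits.right_ne_one (h : N.Admits x y a b) (hN : ¬N.Witnessed x y a b) : b ≠ S.one := by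
  rintro rfl
  obtain ⟨hx, hy, h⟩ := h
  exact hN ⟨hx, hy, y, hy, S.tri_one_mid.1 h, N.label_self hy⟩

theorem Admits.left_ne_one (h : N.Admits x y a b) (hN : ¬N.Witnessed x y a b) : a ≠ S.one :=
  h.swap.right_ne_one fun hw ↦ hN hw.swap

theorem exists_label_of_directedOn {D : Set S.Network} (hD : DirectedOn (· ≤ ·) D) :
    ∃ M : ℕ → ℕ → α, ∀ N ∈ D, ∀ x < N.size, ∀ y < N.size, M x y = N.label x y := by
  have h : ∀ x y, ∃ a, ∀ N ∈ D, x < N.size → y < N.size → a = N.label x y := by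
    intro x y
    by_cases hxy : ∃ N ∈ D, x < N.size ∧ y < N.size
    · obtain ⟨N, hN, hx, hy⟩ := hxy
      refine ⟨N.label x y, fun N' hN' hx' hy' ↦ ?_⟩
      obtain ⟨K, -, hK, hK'⟩ := hD N hN N' hN'
      exact (hK.2 x hx y hy).symm.trans (hK'.2 x hx' y hy')
    · exact ⟨S.one, fun N hN hx hy ↦ (hxy ⟨N, hN, hx, hy⟩).elim⟩
  choose M hM using h
  exact ⟨M, fun N hN x hx y hy ↦ hM x y N hN hx hy⟩

theorem representable_of_directedOn {D : Set S.Network} (hD : DirectedOn (· ≤ ·) D)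
    (hpos : ∃ N ∈ D, 0 < N.size)
    (hwit : ∀ N ∈ D, ∀ x y a b, N.Admits x y a b → ∃ N' ∈ D, N ≤ N' ∧ N'.Witnessed x y a b) :
    @Representable _ S.complexAlgebra := by
  let X := {x : ℕ // ∃ N ∈ D, x < N.size}
  have common : ∀ x y : X, ∃ N ∈ D, x.1 < N.size ∧ y.1 < N.size := by
    rintro ⟨x, N, hN, hx⟩ ⟨y, N', hN', hy⟩
    obtain ⟨K, hKD, hK, hK'⟩ := hD N hN N' hN'
    exact ⟨K, hKD, hx.trans_le hK.1, hy.trans_le hK'.1⟩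
  obtain ⟨M, hM⟩ := exists_label_of_directedOn hD
  have hcomplete : S.IsCompleteLabelling fun x y : X ↦ M x.1 y.1 := by
    refine ⟨fun {x y} ↦ ?_, fun x y z ↦ ?_, fun {x y a b} h ↦ ?_⟩
    · obtain ⟨N, hN, hx, hy⟩ := common x y
      rw [hM N hN x hx y hy, N.label_eq_one_iff hx hy, Subtype.ext_iff]
    · obtain ⟨N, hN, hx, hy⟩ := common x y
      obtain ⟨K, hKD, hK, hz⟩ : ∃ K ∈ D, N ≤ K ∧ z.1 < K.size := by
        obtain ⟨N', hN', hz⟩ := z.2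
        obtain ⟨K, hKD, hK, hK'⟩ := hD N hN N' hN'
        exact ⟨K, hKD, hK, hz.trans_le hK'.1⟩
      replace hx := hx.trans_le hK.1
      replace hy := hy.trans_le hK.1
      rw [hM K hKD x hx y hy, hM K hKD y hy z hz, hM K hKD x hx z hz]
      exact K.tri hx hy hz
    · obtain ⟨N, hN, hx, hy⟩ := common x y
      rw [hM N hN x hx y hy] at h
      obtain ⟨N', hN', -, hx', hy', z, hz, hxz, hyz⟩ := hwit N hN x y a b ⟨hx, hy, h⟩
      refine ⟨⟨z, N', hN', hz⟩, ?_, ?_⟩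
      · rw [hM N' hN' x hx' z hz, hxz]
      · rw [hM N' hN' y hy' z hz, hyz]
  obtain ⟨N, hN, h0⟩ := hpos
  have : Nonempty X := ⟨⟨0, N, hN, h0⟩⟩
  exact S.representable_iff.2 ⟨X, _, hcomplete.isRepresentation⟩

/-- The networks of `𝒦` that witness `a`, `b` above `(x, y)` or have no extension admitting them. -/
def decidingNetworks (𝒦 : Set S.Network)
    (hext : ∀ N ∈ 𝒦, ∀ x y a b, N.Admits x y a b → ∃ N' ∈ 𝒦, N ≤ N' ∧ N'.Witnessed x y a b)
    (x y : ℕ) (a b : α) : Order.Cofinal 𝒦 where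
  carrier := {N | N.1.Witnessed x y a b ∨ ∀ N' ≥ N, ¬N'.1.Admits x y a b}
  isCofinal N := by
    by_cases h : ∃ N' ≥ N, N'.1.Admits x y a b
    · obtain ⟨N', hN', hadm⟩ := h
      obtain ⟨K, hK, hle, hwit⟩ := hext N' N'.2 x y a b hadm
      exact ⟨⟨K, hK⟩, Or.inl hwit, hN'.trans hle⟩
    · exact ⟨N, Or.inr fun N' hN' hadm ↦ h ⟨N', hN', hadm⟩, le_rfl⟩

/-- Repairing the countably many potential defects one after another (Rasiowa–Sikorski) yields
a directed family of networks without defects in the limit. -/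
theorem representable_of_forall_exists_witnessed [Countable α] {𝒦 : Set S.Network}
    (hpos : ∃ N ∈ 𝒦, 0 < N.size)
    (hext : ∀ N ∈ 𝒦, ∀ x y a b, N.Admits x y a b → ∃ N' ∈ 𝒦, N ≤ N' ∧ N'.Witnessed x y a b) :
    @Representable _ S.complexAlgebra := by
  obtain ⟨N₀, hN₀, hsize⟩ := hpos
  have := Encodable.ofCountable (ℕ × ℕ × α × α)
  let 𝒟 := fun i : ℕ × ℕ × α × α ↦ decidingNetworks 𝒦 hext i.1 i.2.1 i.2.2.1 i.2.2.2
  let I := Order.idealOfCofinals (⟨N₀, hN₀⟩ : 𝒦) 𝒟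
  refine representable_of_directedOn (D := Subtype.val '' (I : Set 𝒦)) ?_
    ⟨N₀, ⟨_, Order.mem_idealOfCofinals _ 𝒟, rfl⟩, hsize⟩ ?_
  · rintro _ ⟨N, hN, rfl⟩ _ ⟨N', hN', rfl⟩
    obtain ⟨K, hKI, hK, hK'⟩ := I.directed N hN N' hN'
    exact ⟨K, ⟨K, hKI, rfl⟩, hK, hK'⟩
  · rintro _ ⟨N, hN, rfl⟩ x y a b hadm
    obtain ⟨N', hdec, hN'⟩ := Order.cofinal_meets_idealOfCofinals (⟨N₀, hN₀⟩ : 𝒦) 𝒟 (x, y, a, b)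
    obtain ⟨K, hKI, hK, hK'⟩ := I.directed N hN N' hN'
    exact ⟨K, ⟨K, hKI, rfl⟩, hK,
      (hdec.resolve_right fun h ↦ h K hK' (hadm.mono hK)).mono hK'⟩

variable (S) in
/-- The network with a single node. -/
def single : S.Network where
  size := 1
  label _ _ := S.one
  label_eq_one_iff hu hv := iff_of_true rfl (by omega)
  tri _ _ _ := (S.tri_one_left _ _).2 rfl

/-- The labels of the extension of `N` by the node `N.size`, where `L u` is the label
of `(u, N.size)`. -/
def extendLabel (N : S.Network) (L : ℕ → α) (u v : ℕ) : α :=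
  if u < N.size then if v < N.size then N.label u v else L u
  else if v < N.size then S.conv (L v) else S.one

variable {L : ℕ → α}

theorem extendLabel_old (hu : u < N.size) (hv : v < N.size) :
    N.extendLabel L u v = N.label u v := by
  rw [extendLabel, if_pos hu, if_pos hv]

theorem extendLabel_size_right (hu : u < N.size) : N.extendLabel L u N.size = L u := by
  rw [extendLabel, if_pos hu, if_neg (lt_irrefl _)]

theorem extendLabel_size_left (hv : v < N.size) : N.extendLabel L N.size v = S.conv (L v) := by
  rw [extendLabel, if_neg (lt_irrefl _), if_pos hv]

theorem extendLabel_size_size : N.extendLabel L N.size N.size = S.one := by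
  rw [extendLabel, if_neg (lt_irrefl _), if_neg (lt_irrefl _)]

/-- The extension of `N` by one node, where `L u` is the label of the edge from `u` to it. -/
def extend (N : S.Network) (L : ℕ → α) (hne : ∀ u < N.size, L u ≠ S.one)
    (htri : ∀ u < N.size, ∀ v < N.size, S.tri (N.label u v) (L v) (L u)) : S.Network where
  size := N.size + 1
  label := N.extendLabel L
  label_eq_one_iff {u v} hu hv := by
    rcases Nat.lt_succ_iff_lt_or_eq.1 hu with hu | rfl <;>
      rcases Nat.lt_succ_iff_lt_or_eq.1 hv with hv | rfl
    · rw [extendLabel_old hu hv, N.label_eq_one_iff hu hv]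
    · rw [extendLabel_size_right hu]
      exact iff_of_false (hne u hu) hu.ne
    · rw [extendLabel_size_left hv, S.conv_eq_one_iff]
      exact iff_of_false (hne v hv) hv.ne'
    · exact iff_of_true extendLabel_size_size rfl
  tri {u v w} hu hv hw := by
    rcases Nat.lt_succ_iff_lt_or_eq.1 hu with hu | rfl <;>
      rcases Nat.lt_succ_iff_lt_or_eq.1 hv with hv | rfl <;>
      rcases Nat.lt_succ_iff_lt_or_eq.1 hw with hw | rfl <;>
      simp only [hu, hv, hw, extendLabel_old, extendLabel_size_right, extendLabel_size_left,
        extendLabel_size_size]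
    · exact N.tri hu hv hw
    · exact htri u hu v hv
    · exact S.tri_conv_right (htri u hu w hw)
    · exact S.tri_one_mid.2 rfl
    · simpa only [S.conv_conv] using S.tri_conv (S.tri_conv_left (htri v hv w hw))
    · exact S.tri_one_right.2 rfl
    · exact (S.tri_one_left _ _).2 rfl
    · exact (S.tri_one_left _ _).2 rfl

theorem le_extend (hne : ∀ u < N.size, L u ≠ S.one)
    (htri : ∀ u < N.size, ∀ v < N.size, S.tri (N.label u v) (L v) (L u)) :
    N ≤ N.extend L hne htri :=
  ⟨Nat.le_succ _, fun _ hu _ hv ↦ extendLabel_old hu hv⟩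

end Network

end AtomStructure

/-! ## The rainbow atom structure -/

theorem PartialHom2.symm {G H : BinStruct σ} {i i' : G.V} {j j' : H.V}
    (h : PartialHom2 G H i i' j j') : PartialHom2 G H i' i j' j :=
  fun b ↦ (h b).symm

namespace RbAtom

variable {α β : Type}

theorem conv_conv (a : RbAtom α β) : a.conv.conv = a := by
  cases a <;> rfl

theorem conv_injective : Function.Injective (conv : RbAtom α β → RbAtom α β) :=
  Function.LeftInverse.injective conv_conv

instance [Countable α] [Countable β] : Countable (RbAtom α β) := by
  let code : RbAtom α β → Fin 4 ⊕ α ⊕ (β × β)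
    | id => .inl 0
    | black => .inl 1
    | white => .inl 2
    | yellow => .inl 3
    | green i => .inr (.inl i)
    | red j j' => .inr (.inr (j, j'))
  refine Function.Injective.countable (f := code) fun a b h ↦ ?_
  cases a <;> cases b <;> simp_all [code]

end RbAtom

/-- The explicit table of the triples of atoms that are not forbidden. -/
def Consistent (G H : BinStruct σ) :
    RbAtom G.V H.V → RbAtom G.V H.V → RbAtom G.V H.V → Prop
  | .id, b, c => b = c
  | a, .id, c => a = c
  | a, b, .id => a = b.conv
  | .green _, .green _, .green _ => False
  | .green _, .green _, .white => False
  | .green _, .white, .green _ => False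
  | .white, .green _, .green _ => False
  | .yellow, .yellow, .yellow => False
  | .yellow, .yellow, .black => False
  | .yellow, .black, .yellow => False
  | .black, .yellow, .yellow => False
  | .red j₁ j₂, .red j₂' j₃, .red j₁' j₃' => j₁ = j₁' ∧ j₂ = j₂' ∧ j₃ = j₃'
  | .green i, .green i', .red j j' => i ≠ i' ∧ PartialHom2 G H i i' j j'
  | .green i, .red j j', .green i' => i ≠ i' ∧ PartialHom2 G H i i' j j'
  | .red j j', .green i', .green i => i ≠ i' ∧ PartialHom2 G H i i' j j'
  | _, _, _ => True

section Consistent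

variable {G H : BinStruct σ} {a b c : RbAtom G.V H.V}

theorem Consistent.conv_left (h : Consistent G H a b c) : Consistent G H a.conv c b := by
  cases a <;> cases b <;> cases c <;>
    simp_all [Consistent, RbAtom.conv, PartialHom2.symm, ne_comm]

theorem Consistent.conv_right (h : Consistent G H a b c) : Consistent G H c b.conv a := by
  cases a <;> cases b <;> cases c <;>
    simp_all [Consistent, RbAtom.conv, PartialHom2.symm, ne_comm]

theorem consistent_id_left : Consistent G H .id b c ↔ b = c := by
  cases b <;> cases c <;> simp [Consistent]

theorem BaseForbidden.not_consistent (h : BaseForbidden G H a b c) : ¬Consistent G H a b c := by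
  cases h <;> simp_all [Consistent]

theorem Forbidden.not_consistent (h : Forbidden G H a b c) : ¬Consistent G H a b c := by
  intro hc
  obtain ⟨x, y, z, hxyz, h⟩ := h
  refine hxyz.not_consistent ?_
  simp only [Prod.mk.injEq] at h
  rcases h with ⟨rfl, rfl, rfl⟩ | ⟨rfl, rfl, rfl⟩ | ⟨rfl, rfl, rfl⟩ | ⟨rfl, rfl, rfl⟩ |
    ⟨rfl, rfl, rfl⟩ | ⟨rfl, rfl, rfl⟩
  · exact hc
  · simpa only [RbAtom.conv_conv] using hc.conv_left
  · simpa only [RbAtom.conv_conv] using hc.conv_right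
  · simpa only [RbAtom.conv_conv] using hc.conv_right.conv_left.conv_right
  · simpa only [RbAtom.conv_conv] using hc.conv_right.conv_left
  · simpa only [RbAtom.conv_conv] using hc.conv_left.conv_right

theorem forbidden_of_not_consistent (h : ¬Consistent G H a b c) : Forbidden G H a b c := by
  unfold Consistent at h
  split at h
  · exact ⟨_, _, _, .ident _ _ h, .inl rfl⟩
  · exact ⟨_, _, _, .ident c.conv a.conv (RbAtom.conv_injective.ne (Ne.symm h)),
      by simp [RbAtom.conv_conv]⟩
  · exact ⟨_, _, _, .ident a b.conv h, .inr (.inr (.inr (.inr (.inl (by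
      rw [RbAtom.conv_conv]; rfl)))))⟩
  · exact ⟨_, _, _, .ggg _ _ _, .inl rfl⟩
  · exact ⟨_, _, _, .ggw _ _, .inl rfl⟩
  · exact ⟨_, _, _, .ggw _ _, .inr (.inl rfl)⟩
  · exact ⟨_, _, _, .ggw _ _, .inr (.inr (.inl rfl))⟩
  · exact ⟨_, _, _, .yyy, .inl rfl⟩
  · exact ⟨_, _, _, .yyb, .inl rfl⟩
  · exact ⟨_, _, _, .yyb, .inr (.inl rfl)⟩
  · exact ⟨_, _, _, .yyb, .inr (.inr (.inl rfl))⟩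
  · exact ⟨_, _, _, .rrr _ _ _ _ _ _ h, .inl rfl⟩
  · exact ⟨_, _, _, .ggr _ _ _ _ h, .inl rfl⟩
  · exact ⟨_, _, _, .ggr _ _ _ _ h, .inr (.inl rfl)⟩
  · exact ⟨_, _, _, .ggr _ _ _ _ h, .inr (.inr (.inl rfl))⟩
  · exact (h trivial).elim

theorem not_forbidden_iff : ¬Forbidden G H a b c ↔ Consistent G H a b c :=
  not_iff_comm.1 ⟨forbidden_of_not_consistent, Forbidden.not_consistent⟩

theorem consistent_white (ha : a ≠ .id) (hb : b ≠ .id)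
    (hab : ∀ i i', ¬(a = .green i ∧ b = .green i')) : Consistent G H a b .white := by
  cases a <;> cases b <;> simp_all [Consistent]

theorem consistent_black (ha : a ≠ .id) (hb : b ≠ .id) (hab : ¬(a = .yellow ∧ b = .yellow)) :
    Consistent G H a b .black := by
  cases a <;> cases b <;> simp_all [Consistent]

/-- Any two distinct vertices of `G` can be mapped homomorphically to some vertices of `H`. -/
def PairwiseMappable (G H : BinStruct σ) : Prop :=
  ∀ ⦃i i' : G.V⦄, i ≠ i' → ∃ j j', PartialHom2 G H i i' j j'

theorem PairwiseMappable.exists_consistent_green_yellow (hGH : PairwiseMappable G H) (i i' : G.V) :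
    ∃ f, Consistent G H (.green i) (.green i') f ∧ Consistent G H .yellow .yellow f := by
  by_cases h : i = i'
  · exact ⟨.id, congrArg _ h, rfl⟩
  · obtain ⟨j, j', hj⟩ := hGH h
    exact ⟨.red j j', ⟨h, hj⟩, trivial⟩

theorem exists_eq_red_of_consistent {i i' : G.V} (hc : c ≠ .id)
    (hg : Consistent G H (.green i) (.green i') c) (hy : Consistent G H .yellow .yellow c) :
    ∃ j j', c = .red j j' ∧ i ≠ i' ∧ PartialHom2 G H i i' j j' := by
  cases c with
  | id => exact (hc rfl).elim
  | red j j' => exact ⟨j, j', rfl, hg⟩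
  | black => exact hy.elim
  | white => exact hg.elim
  | yellow => exact hy.elim
  | green => exact hg.elim

/-- Black fits above any two non-identity atoms except two yellows, white except two greens. So
only the sides of two apices of a cone require a red atom. -/
theorem consistent_black_or_white_or_cone {a' b' : RbAtom G.V H.V} (ha : a ≠ .id) (hb : b ≠ .id)
    (ha' : a' ≠ .id) (hb' : b' ≠ .id) :
    (Consistent G H a b .black ∧ Consistent G H a' b' .black) ∨
    (Consistent G H a b .white ∧ Consistent G H a' b' .white) ∨
    ∃ i i', (a = .green i ∧ b = .green i') ∧ (a' = .yellow ∧ b' = .yellow) ∨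
      (a = .yellow ∧ b = .yellow) ∧ (a' = .green i ∧ b' = .green i') := by
  by_cases hyy : ¬(a = .yellow ∧ b = .yellow) ∧ ¬(a' = .yellow ∧ b' = .yellow)
  · exact .inl ⟨consistent_black ha hb hyy.1, consistent_black ha' hb' hyy.2⟩
  by_cases hgg : (∀ i i', ¬(a = .green i ∧ b = .green i')) ∧
      ∀ i i', ¬(a' = .green i ∧ b' = .green i')
  · exact .inr (.inl ⟨consistent_white ha hb hgg.1, consistent_white ha' hb' hgg.2⟩)
  · exact .inr (.inr (by grind))

theorem PairwiseMappable.exists_consistent (hGH : PairwiseMappable G H)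
    {a' b' : RbAtom G.V H.V} (ha : a ≠ .id) (hb : b ≠ .id) (ha' : a' ≠ .id) (hb' : b' ≠ .id) :
    ∃ f, Consistent G H a b f ∧ Consistent G H a' b' f := by
  obtain h | h | ⟨i, i', ⟨⟨rfl, rfl⟩, rfl, rfl⟩ | ⟨⟨rfl, rfl⟩, rfl, rfl⟩⟩ :=
    consistent_black_or_white_or_cone (G := G) (H := H) ha hb ha' hb'
  · exact ⟨_, h⟩
  · exact ⟨_, h⟩
  · exact hGH.exists_consistent_green_yellow i i'
  · exact (hGH.exists_consistent_green_yellow i i').imp fun _ ↦ And.symm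

/-- The atom structure of the rainbow algebra `B_{G,H}`. -/
def rainbow (G H : BinStruct σ) (hGH : PairwiseMappable G H) :
    AtomStructure (RbAtom G.V H.V) where
  one := .id
  conv := RbAtom.conv
  tri a b c := ¬Forbidden G H a b c
  conv_conv := RbAtom.conv_conv
  tri_one_left _ _ := not_forbidden_iff.trans consistent_id_left
  tri_conv_left := by
    simp only [not_forbidden_iff]
    exact Consistent.conv_left
  tri_conv_right := by
    simp only [not_forbidden_iff]
    exact Consistent.conv_right
  tri_assoc_of_ne_one {a b c d e} ha hb hc hd _ _ := by
    simp only [not_forbidden_iff]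
    have ha' : a.conv ≠ .id := fun h ↦ ha (RbAtom.conv_injective h)
    obtain ⟨f, hbc, haf⟩ := hGH.exists_consistent hb hc ha' hd
    refine ⟨f, hbc, ?_⟩
    simpa only [RbAtom.conv_conv] using haf.conv_left

theorem rainbow_tri {hGH : PairwiseMappable G H} :
    (rainbow G H hGH).tri a b c ↔ Consistent G H a b c :=
  not_forbidden_iff

end Consistent

/-! ## From representations of rainbow algebras to homomorphisms -/

section NotRepresentable

variable {G H : BinStruct σ}

variable {hGH : PairwiseMappable G H} {X : Type} {θ : Set (RbAtom G.V H.V) → Set (X × X)}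

/-- A cone over the edge `(x, y)` of a representation: for every vertex `i` of `G`, the apex `z i`
is joined to `x` by `green i` and to `y` by yellow. -/
structure IsCone (θ : Set (RbAtom G.V H.V) → Set (X × X)) (x y : X) (z : G.V → X) : Prop where
  green : ∀ i, (x, z i) ∈ θ {.green i}
  yellow : ∀ i, (z i, y) ∈ θ {.yellow}

theorem AtomStructure.IsRepresentation.exists_isCone
    (hθ : (rainbow G H hGH).IsRepresentation θ) : ∃ x y z, IsCone θ x y z := by
  obtain ⟨⟨x, y⟩, hxy⟩ := hθ.nonempty_map (Set.singleton_nonempty .black)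
  have h : ∀ i, ∃ z, (x, z) ∈ θ {.green i} ∧ (z, y) ∈ θ {.yellow} := by
    intro i
    refine hθ.exists_of_mem_comp (hθ.map_mono (Set.singleton_subset_iff.2 ?_) hxy)
    exact ⟨_, rfl, _, rfl, rainbow_tri.2 trivial⟩
  choose z hz hz' using h
  exact ⟨x, y, z, hz, hz'⟩

theorem IsCone.exists_red [Finite H.V] (hθ : (rainbow G H hGH).IsRepresentation θ) {x y : X}
    {z : G.V → X} (hz : IsCone θ x y z) {i i' : G.V} (hne : i ≠ i') :
    ∃ j j', (z i, z i') ∈ θ {.red j j'} ∧ PartialHom2 G H i i' j j' := by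
  let C := (rainbow G H hGH).comp {.green i} {.green i'} ∩
    (rainbow G H hGH).comp {.yellow} {.yellow}
  have hred : ∀ c ∈ C, ∃ j j', c = .red j j' ∧ PartialHom2 G H i i' j j' := by
    rintro c ⟨⟨_, rfl, _, rfl, hg⟩, _, rfl, _, rfl, hy⟩
    have hc : c ≠ .id := fun hc ↦ hne (RbAtom.green.inj (hc ▸ rainbow_tri.1 hg))
    obtain ⟨j, j', hc, -, hj⟩ :=
      exists_eq_red_of_consistent hc (rainbow_tri.1 hg) (rainbow_tri.1 hy)
    exact ⟨j, j', hc, hj⟩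
  have hfin : C.Finite := by
    refine (Set.finite_range fun p : H.V × H.V ↦ RbAtom.red p.1 p.2).subset fun c hc ↦ ?_
    obtain ⟨j, j', rfl, -⟩ := hred c hc
    exact ⟨(j, j'), rfl⟩
  have hmem : (z i, z i') ∈ θ C :=
    hθ.mem_inter (hθ.mem_comp (hθ.conv_mem (hz.green i)) (hz.green i'))
      (hθ.mem_comp (hz.yellow i) (hθ.conv_mem (hz.yellow i')))
  obtain ⟨c, hc, hmem⟩ := hθ.exists_mem_singleton hfin hmem
  obtain ⟨j, j', rfl, hj⟩ := hred c hc
  exact ⟨j, j', hmem, hj⟩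

/-- The red labels between the apices of a cone over `G` are `red (f i) (f i')` for a homomorphism
`f` from `G` to `H`, by the consistency of red triangles. -/
theorem exists_isHom_of_representable [Finite H.V] [Nonempty H.V]
    (h : @Representable _ (rainbow G H hGH).complexAlgebra) : ∃ f, IsHom G H f := by
  obtain ⟨X, θ, hθ⟩ := (rainbow G H hGH).representable_iff.1 h
  obtain ⟨x, y, z, hz⟩ := hθ.exists_isCone
  have hcolour : ∀ i, ∃ j, ∀ i' ≠ i, ∃ j', (z i, z i') ∈ θ {.red j j'} := by
    intro i
    by_cases hi : ∃ k, k ≠ i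
    · obtain ⟨k, hk⟩ := hi
      obtain ⟨j, l, hjl, -⟩ := hz.exists_red hθ hk.symm
      refine ⟨j, fun i' hi' ↦ ?_⟩
      by_cases hik : k = i'
      · exact ⟨l, hik ▸ hjl⟩
      obtain ⟨j', l', hjl', -⟩ := hz.exists_red hθ hi'.symm
      obtain ⟨m, m', hm, -⟩ := hz.exists_red hθ hik
      obtain ⟨rfl, -, -⟩ := rainbow_tri.1 (hθ.tri_of_mem hjl hm hjl')
      exact ⟨l', hjl'⟩
    · exact ⟨Classical.arbitrary H.V, fun i' hi' ↦ (hi ⟨i', hi'⟩).elim⟩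
  choose f hf using hcolour
  refine ⟨f, fun b i i' hne hii' ↦ ?_⟩
  obtain ⟨j, j', hjj', hj⟩ := hz.exists_red hθ hne
  have hi : j = f i := by
    obtain ⟨l, hl⟩ := hf i i' hne.symm
    exact (RbAtom.red.inj (hθ.eq_of_mem_singleton hjj' hl)).1
  have hi' : j' = f i' := by
    obtain ⟨l, hl⟩ := hf i' i hne
    exact (RbAtom.red.inj (hθ.eq_of_mem_singleton (hθ.conv_mem hjj') hl)).1
  rw [← hi, ← hi']
  exact (hj b).1 hii'

end NotRepresentable

/-! ## From colouring games to formulas -/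

/-- The part of a winning strategy in the colouring game on `(G, H)` that formulas see: a family of
positions closed under answering moves, in which the same palettes are nonempty on both sides
(C1). Of (C2) only the instances are kept where both palettes are singletons on both sides. -/
structure IsWinningInvariant (G H : BinStruct σ) (n : ℕ)
    (Inv : (Fin n → Set G.V) → (Fin n → Set H.V) → Prop) : Prop where
  nonempty_iff : ∀ ⦃g h⦄, Inv g h → ∀ π, (PaletteSet g π).Nonempty ↔ (PaletteSet h π).Nonempty
  rel_iff : ∀ ⦃g h⦄, Inv g h → ∀ ⦃π π' i i' k k'⦄, PaletteSet g π = {i} → PaletteSet h π = {k} →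
    PaletteSet g π' = {i'} → PaletteSet h π' = {k'} → ∀ b, G.rel b i i' ↔ H.rel b k k'
  moveG : ∀ ⦃g h⦄, Inv g h → ∀ t S, ∃ T, Inv (Function.update g t S) (Function.update h t T)
  moveH : ∀ ⦃g h⦄, Inv g h → ∀ t T, ∃ S, Inv (Function.update g t S) (Function.update h t T)

/-- The colour `e` is carried by the vertex `i` only on one side, and by `k` only on the other;
the position then treats `i` and `k` as corresponding vertices. -/
def Named {V W : Type} {n : ℕ} (g : Fin n → Set V) (h : Fin n → Set W) (e : Fin n) (i : V)
    (k : W) : Prop :=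
  g e = {i} ∧ h e = {k}

theorem paletteSet_eq_singleton {V : Type} {n : ℕ} {g : Fin n → Set V} {e : Fin n} {i : V}
    (hg : g e = {i}) : PaletteSet g {t | i ∈ g t} = {i} := by
  refine Set.Subset.antisymm (fun x hx ↦ ?_) (Set.singleton_subset_iff.2 fun _ ↦ Iff.rfl)
  have hie : i ∈ g e := hg ▸ rfl
  exact hg ▸ (hx e).2 hie

namespace IsWinningInvariant

section

variable {G H F : BinStruct σ} {n : ℕ} {Inv : (Fin n → Set G.V) → (Fin n → Set H.V) → Prop}
  {g : Fin n → Set G.V} {h : Fin n → Set H.V} {e e' : Fin n} {i i' : G.V} {k k' : H.V}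

theorem symm (hI : IsWinningInvariant G H n Inv) : IsWinningInvariant H G n (flip Inv) where
  nonempty_iff _ _ hgh π := (hI.nonempty_iff hgh π).symm
  rel_iff _ _ hgh _ _ _ _ _ _ hi hk hi' hk' b := (hI.rel_iff hgh hk hi hk' hi' b).symm
  moveG _ _ hgh := hI.moveH hgh
  moveH _ _ hgh := hI.moveG hgh

theorem exists_same_colours (hI : IsWinningInvariant G H n Inv) (hgh : Inv g h) (i : G.V) :
    ∃ k : H.V, ∀ t, k ∈ h t ↔ i ∈ g t :=
  (hI.nonempty_iff hgh {t | i ∈ g t}).1 ⟨i, fun _ ↦ Iff.rfl⟩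

theorem mem_iff (hI : IsWinningInvariant G H n Inv) (hgh : Inv g h) (hik : Named g h e i k)
    (t : Fin n) : i ∈ g t ↔ k ∈ h t := by
  obtain ⟨y, hy⟩ := hI.exists_same_colours hgh i
  have hye : y ∈ h e := (hy e).2 (hik.1 ▸ rfl)
  obtain rfl : y = k := by simpa only [hik.2, Set.mem_singleton_iff] using hye
  exact (hy t).symm

theorem eq_iff (hI : IsWinningInvariant G H n Inv) (hgh : Inv g h) (hik : Named g h e i k)
    (hik' : Named g h e' i' k') : i = i' ↔ k = k' := by
  simpa only [hik'.1, hik'.2, Set.mem_singleton_iff] using hI.mem_iff hgh hik e'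

theorem rel_iff_of_named (hI : IsWinningInvariant G H n Inv) (hgh : Inv g h)
    (hik : Named g h e i k) (hik' : Named g h e' i' k') (b : σ) :
    G.rel b i i' ↔ H.rel b k k' := by
  refine hI.rel_iff hgh (paletteSet_eq_singleton hik.1) ?_ (paletteSet_eq_singleton hik'.1) ?_ b
  · simpa only [hI.mem_iff hgh hik] using paletteSet_eq_singleton hik.2
  · simpa only [hI.mem_iff hgh hik'] using paletteSet_eq_singleton hik'.2

theorem partialHom2_iff (hI : IsWinningInvariant G H n Inv) (hgh : Inv g h)
    (hik : Named g h e i k) (hik' : Named g h e' i' k') {j j' : F.V} :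
    PartialHom2 G F i i' j j' ↔ PartialHom2 H F k k' j j' := by
  simp only [PartialHom2, hI.rel_iff_of_named hgh hik hik', hI.rel_iff_of_named hgh hik' hik]

/-- Two colours are needed: a singleton played on one side may be answered by a larger set, which
is cut down to a singleton by playing back one of its elements in another colour. -/
theorem exists_named (hI : IsWinningInvariant G H n Inv) (hgh : Inv g h) (i : G.V)
    (hne : e ≠ e') : ∃ k g' h', Inv g' h' ∧ Named g' h' e' i k ∧
      ∀ t, t ≠ e → t ≠ e' → g' t = g t ∧ h' t = h t := by
  obtain ⟨T, hT⟩ := hI.moveG hgh e {i}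
  obtain ⟨k, hk⟩ := hI.exists_same_colours hT i
  have hkT : k ∈ T := by simpa using (hk e).2
  obtain ⟨U, hU⟩ := hI.moveH hT e' {k}
  have hUi : ∀ x ∈ U, x = i := by
    intro x hx
    obtain ⟨y, hy⟩ := hI.exists_same_colours hU x
    obtain rfl : y = k := by simpa [hx] using hy e'
    simpa [Function.update_of_ne hne, hkT] using hy e
  obtain ⟨x, hx⟩ := hI.symm.exists_same_colours hU k
  have hxU : x ∈ U := by simpa using hx e'
  refine ⟨k, _, _, hU, ⟨?_, Function.update_self ..⟩, fun t ht ht' ↦ ?_⟩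
  · rw [Function.update_self, Set.eq_singleton_iff_unique_mem]
    exact ⟨hUi x hxU ▸ hxU, hUi⟩
  · simp only [Function.update_of_ne ht, Function.update_of_ne ht', and_self]

end

section

variable {G H F : BinStruct σ} {c : ℕ}
  {Inv : (Fin (c + 3) → Set G.V) → (Fin (c + 3) → Set H.V) → Prop}
  {g : Fin (c + 3) → Set G.V} {h : Fin (c + 3) → Set H.V}

/-- Of the three spare colours, two suffice to name a vertex, so a colour `e` can be preserved. -/
theorem exists_named_spare (hI : IsWinningInvariant G H (c + 3) Inv) (hgh : Inv g h) (i : G.V)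
    (e : Fin (c + 3)) : ∃ e' k g' h', Inv g' h' ∧ Named g' h' e' i k ∧ (g' e = g e ∧ h' e = h e) ∧
      ∀ t : Fin c, g' (liftCol t) = g (liftCol t) ∧ h' (liftCol t) = h (liftCol t) := by
  obtain ⟨e₁, e₂, h₁, h₂, hne, he₁, he₂⟩ : ∃ e₁ e₂ : Fin (c + 3),
      c ≤ e₁ ∧ c ≤ e₂ ∧ e₁ ≠ e₂ ∧ e ≠ e₁ ∧ e ≠ e₂ := by
    by_cases h₀ : e.1 = c
    · exact ⟨⟨c + 1, by omega⟩, ⟨c + 2, by omega⟩, by simp, by simp, by simp [Fin.ext_iff, h₀]⟩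
    by_cases h₁ : e.1 = c + 1
    · exact ⟨⟨c, by omega⟩, ⟨c + 2, by omega⟩, by simp, by simp, by simp [Fin.ext_iff, h₁]⟩
    · exact ⟨⟨c, by omega⟩, ⟨c + 1, by omega⟩, by simp, by simp, by simp [Fin.ext_iff, h₀, h₁]⟩
  have lift_ne : ∀ (t : Fin c) {e : Fin (c + 3)}, c ≤ e → liftCol t ≠ e := fun t _ he hte ↦
    absurd he (hte ▸ t.2.not_ge)
  obtain ⟨k, g', h', hgh', hik, hkeep⟩ := hI.exists_named hgh i hne
  exact ⟨e₂, k, g', h', hgh', hik, hkeep e he₁ he₂, fun t ↦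
    hkeep _ (lift_ne t h₁) (lift_ne t h₂)⟩

theorem pairwiseMappable (hI : IsWinningInvariant G H (c + 3) Inv) (hgh : Inv g h)
    (hHF : PairwiseMappable H F) : PairwiseMappable G F := by
  intro i i' hne
  obtain ⟨e, k, g₁, h₁, hgh₁, hik, -⟩ := hI.exists_named_spare hgh i 0
  obtain ⟨e', k', g₂, h₂, hgh₂, hik', ⟨hg, hh⟩, -⟩ := hI.exists_named_spare hgh₁ i' e
  replace hik : Named g₂ h₂ e i k := ⟨hg.trans hik.1, hh.trans hik.2⟩
  obtain ⟨j, j', hj⟩ := hHF (mt (hI.eq_iff hgh₂ hik hik').2 hne)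
  exact ⟨j, j', (hI.partialHom2_iff hgh₂ hik hik').2 hj⟩

end

end IsWinningInvariant

namespace RbAtom

variable {α α' β : Type} {M N : α → α' → Prop} {a : RbAtom α β} {a' : RbAtom α' β}

/-- Correspondence of atoms of two rainbow algebras over the same red structure: equal except that
the subscripts of greens are related by `M`. -/
inductive Corr (M : α → α' → Prop) : RbAtom α β → RbAtom α' β → Prop
  | id : Corr M .id .id
  | black : Corr M .black .black
  | white : Corr M .white .white
  | yellow : Corr M .yellow .yellow
  | green {i k} : M i k → Corr M (.green i) (.green k)
  | red (j j') : Corr M (.red j j') (.red j j')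

namespace Corr

theorem symm (h : Corr M a a') : Corr (flip M) a' a := by
  cases h <;> constructor
  assumption

theorem mono (h : Corr M a a') (hMN : ∀ i k, M i k → N i k) : Corr N a a' := by
  cases h <;> constructor
  exact hMN _ _ ‹_›

theorem conv (h : Corr M a a') : Corr M a.conv a'.conv := by
  cases h <;> constructor
  assumption

theorem eq_id_iff (h : Corr M a a') : a = .id ↔ a' = .id := by
  cases h <;> simp

theorem of_forall_ne_green (h : Corr M a a') (ha : ∀ i, a ≠ .green i) : Corr N a a' := by
  cases h with
  | green => exact (ha _ rfl).elim
  | _ => constructor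

theorem exists_index {ι : Type} [Nonempty ι] {M : ι → α → α' → Prop}
    (h : Corr (fun i k ↦ ∃ e, M e i k) a a') : ∃ e, Corr (M e) a a' := by
  cases h with
  | green hik => exact hik.imp fun _ ↦ .green
  | _ => exact ⟨Classical.arbitrary ι, by constructor⟩

theorem consistent {G H F : BinStruct σ} {M : G.V → H.V → Prop}
    (hM : ∀ ⦃i k i' k'⦄, M i k → M i' k' → (i = i' ↔ k = k') ∧
      ∀ j j', PartialHom2 G F i i' j j' → PartialHom2 H F k k' j j')
    {a b d : RbAtom G.V F.V} {a' b' d' : RbAtom H.V F.V} (ha : Corr M a a') (hb : Corr M b b')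
    (hd : Corr M d d') (h : Consistent G F a b d) : Consistent H F a' b' d' := by
  cases ha <;> cases hb <;> cases hd <;> simp_all [Consistent, RbAtom.conv] <;> grind

end Corr

end RbAtom

theorem Consistent.exists_forall_ne_green {G F : BinStruct σ} {a b d : RbAtom G.V F.V}
    (h : Consistent G F a b d) :
    (∀ i, a ≠ .green i) ∨ (∀ i, b ≠ .green i) ∨ ∀ i, d ≠ .green i := by
  by_contra! hall
  obtain ⟨⟨_, rfl⟩, ⟨_, rfl⟩, ⟨_, rfl⟩⟩ := hall
  exact h

section Mirrors

variable {G H F : BinStruct σ} {c : ℕ}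

/-- The assignments `v` and `w` of elements of `B_{G,F}` and `B_{H,F}` are kept in step by a
position `(g, h)` of the colouring game in `Inv`: they have the same non-green atoms, and their
green atoms are recorded by the first `c` colours. -/
structure Mirrors (Inv : (Fin (c + 3) → Set G.V) → (Fin (c + 3) → Set H.V) → Prop)
    (v : Fin c → Set (RbAtom G.V F.V)) (w : Fin c → Set (RbAtom H.V F.V))
    (g : Fin (c + 3) → Set G.V) (h : Fin (c + 3) → Set H.V) : Prop where
  inv : Inv g h
  left : ∀ t, v t = mirrorElt (w t) (g (liftCol t))
  right : ∀ t, w t = mirrorElt (v t) (h (liftCol t))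

/-- The vertices named by a common colour of the position `(g, h)`. -/
abbrev Matched {V W : Type} {n : ℕ} (g : Fin n → Set V) (h : Fin n → Set W) (i : V) (k : W) :
    Prop :=
  ∃ e, Named g h e i k

theorem Matched.symm {V W : Type} {n : ℕ} {g : Fin n → Set V} {h : Fin n → Set W} {i : V} {k : W}
    (hik : Matched g h i k) : Matched h g k i :=
  hik.imp fun _ ↦ And.symm

theorem RbAtom.Corr.symm_matched {α α' β : Type} {n : ℕ} {g : Fin n → Set α} {h : Fin n → Set α'}
    {a : RbAtom α β} {a' : RbAtom α' β} (ha : RbAtom.Corr (Matched g h) a a') :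
    RbAtom.Corr (Matched h g) a' a :=
  ha.symm.mono fun _ _ ↦ Matched.symm

variable {Inv : (Fin (c + 3) → Set G.V) → (Fin (c + 3) → Set H.V) → Prop}
  {v : Fin c → Set (RbAtom G.V F.V)} {w : Fin c → Set (RbAtom H.V F.V)}
  {g : Fin (c + 3) → Set G.V} {h : Fin (c + 3) → Set H.V}

theorem mirrorElt_mirrorElt_greenPart (x : Set (RbAtom G.V F.V)) (T : Set H.V) :
    mirrorElt (mirrorElt x T) (greenPart x) = x := by
  ext a
  cases a <;> rfl

namespace Mirrors

theorem symm (hm : Mirrors Inv v w g h) : Mirrors (flip Inv) w v h g :=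
  ⟨hm.inv, hm.right, hm.left⟩

theorem update (hm : Mirrors Inv v w g h) {t : Fin c} {x : Set (RbAtom G.V F.V)} {T : Set H.V}
    (hT : Inv (Function.update g (liftCol t) (greenPart x)) (Function.update h (liftCol t) T)) :
    Mirrors Inv (Function.update v t x) (Function.update w t (mirrorElt x T))
      (Function.update g (liftCol t) (greenPart x)) (Function.update h (liftCol t) T) := by
  have hlift : ∀ {s}, s ≠ t → liftCol s ≠ liftCol t := (Fin.castLE_injective _).ne
  refine ⟨hT, fun s ↦ ?_, fun s ↦ ?_⟩ <;> by_cases hs : s = t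
  · subst hs
    simp only [Function.update_self, mirrorElt_mirrorElt_greenPart]
  · simpa only [Function.update_of_ne hs, Function.update_of_ne (hlift hs)] using hm.left s
  · subst hs
    simp only [Function.update_self]
  · simpa only [Function.update_of_ne hs, Function.update_of_ne (hlift hs)] using hm.right s

variable (hI : IsWinningInvariant G H (c + 3) Inv)

include hI

theorem mem_iff (hm : Mirrors Inv v w g h) {a : RbAtom G.V F.V} {a' : RbAtom H.V F.V}
    (ha : RbAtom.Corr (Matched g h) a a') (t : Fin c) : a ∈ v t ↔ a' ∈ w t := by
  cases ha with
  | green hik =>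
    obtain ⟨e, hik⟩ := hik
    rw [hm.left, hm.right]
    exact hI.mem_iff hm.inv hik (liftCol t)
  | _ =>
    rw [hm.left]
    rfl

theorem exists_corr (hm : Mirrors Inv v w g h) {d : RbAtom G.V F.V} {d' : RbAtom H.V F.V}
    (hd : RbAtom.Corr (Matched g h) d d') (a : RbAtom G.V F.V) : ∃ g' h' a', Mirrors Inv v w g' h' ∧
      RbAtom.Corr (Matched g' h') a a' ∧ RbAtom.Corr (Matched g' h') d d' := by
  cases a with
  | green i =>
    obtain ⟨e, hd⟩ := hd.exists_index
    obtain ⟨e', k, g', h', hgh', hik, ⟨hg, hh⟩, hkeep⟩ := hI.exists_named_spare hm.inv i e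
    refine ⟨g', h', .green k, ⟨hgh', fun t ↦ ?_, fun t ↦ ?_⟩, .green ⟨e', hik⟩,
      hd.mono fun _ _ hj ↦ ⟨e, hg.trans hj.1, hh.trans hj.2⟩⟩
    · rw [(hkeep t).1, ← hm.left]
    · rw [(hkeep t).2, ← hm.right]
  | id => exact ⟨g, h, _, hm, .id, hd⟩
  | black => exact ⟨g, h, _, hm, .black, hd⟩
  | white => exact ⟨g, h, _, hm, .white, hd⟩
  | yellow => exact ⟨g, h, _, hm, .yellow, hd⟩
  | red j j' => exact ⟨g, h, _, hm, .red j j', hd⟩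

/-- At most two of the three atoms are green, so at most two vertices have to be named. -/
theorem exists_corr_of_consistent (hm : Mirrors Inv v w g h) {a b d : RbAtom G.V F.V}
    {d' : RbAtom H.V F.V} (hd : RbAtom.Corr (Matched g h) d d') (habd : Consistent G F a b d) :
    ∃ g' h' a' b', Mirrors Inv v w g' h' ∧ RbAtom.Corr (Matched g' h') a a' ∧
      RbAtom.Corr (Matched g' h') b b' ∧ RbAtom.Corr (Matched g' h') d d' := by
  obtain ⟨g₁, h₁, a', hm₁, ha, hd₁⟩ := hm.exists_corr hI hd a
  rcases habd.exists_forall_ne_green with hna | hnb | hnd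
  · obtain ⟨g₂, h₂, b', hm₂, hb, hd₂⟩ := hm.exists_corr hI hd b
    exact ⟨g₂, h₂, a', b', hm₂, ha.of_forall_ne_green hna, hb, hd₂⟩
  · obtain ⟨_, _, b', _, hb, -⟩ := hm.exists_corr hI hd b
    exact ⟨g₁, h₁, a', b', hm₁, ha, hb.of_forall_ne_green hnb, hd₁⟩
  · obtain ⟨g₂, h₂, b', hm₂, hb, ha⟩ := hm₁.exists_corr hI ha b
    exact ⟨g₂, h₂, a', b', hm₂, ha, hb, hd.of_forall_ne_green hnd⟩

theorem consistent (hm : Mirrors Inv v w g h) {a b d : RbAtom G.V F.V} {a' b' d' : RbAtom H.V F.V}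
    (ha : RbAtom.Corr (Matched g h) a a') (hb : RbAtom.Corr (Matched g h) b b')
    (hd : RbAtom.Corr (Matched g h) d d') (habd : Consistent G F a b d) :
    Consistent H F a' b' d' := by
  refine RbAtom.Corr.consistent (fun i k i' k' hik hik' ↦ ?_) ha hb hd habd
  obtain ⟨e, hik⟩ := hik
  obtain ⟨e', hik'⟩ := hik'
  exact ⟨hI.eq_iff hm.inv hik hik', fun _ _ ↦ (hI.partialHom2_iff hm.inv hik hik').1⟩

end Mirrors

/-- The elements `X` and `X'` have corresponding atoms, in every position of the colouring game
that keeps `v` and `w` in step. -/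
def Agree (Inv : (Fin (c + 3) → Set G.V) → (Fin (c + 3) → Set H.V) → Prop)
    (v : Fin c → Set (RbAtom G.V F.V)) (w : Fin c → Set (RbAtom H.V F.V))
    (X : Set (RbAtom G.V F.V)) (X' : Set (RbAtom H.V F.V)) : Prop :=
  ∀ ⦃g h⦄, Mirrors Inv v w g h → ∀ ⦃a a'⦄, RbAtom.Corr (Matched g h) a a' → (a ∈ X ↔ a' ∈ X')

namespace Agree

variable {X Y : Set (RbAtom G.V F.V)} {X' Y' : Set (RbAtom H.V F.V)}

theorem symm (hX : Agree Inv v w X X') : Agree (flip Inv) w v X' X :=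
  fun _ _ hm _ _ ha ↦ (hX hm.symm ha.symm_matched).symm

variable (hI : IsWinningInvariant G H (c + 3) Inv)

include hI

theorem mem_rbComp (hX : Agree Inv v w X X') (hY : Agree Inv v w Y Y')
    (hm : Mirrors Inv v w g h) {d : RbAtom G.V F.V} {d' : RbAtom H.V F.V}
    (hd : RbAtom.Corr (Matched g h) d d') (hdXY : d ∈ rbComp G F X Y) :
    d' ∈ rbComp H F X' Y' := by
  obtain ⟨a, ha, b, hb, habd⟩ := hdXY
  rw [not_forbidden_iff] at habd
  obtain ⟨g', h', a', b', hm, haa', hbb', hdd'⟩ := hm.exists_corr_of_consistent hI hd habd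
  exact ⟨a', (hX hm haa').1 ha, b', (hY hm hbb').1 hb,
    not_forbidden_iff.2 (hm.consistent hI haa' hbb' hdd' habd)⟩

theorem rbComp (hX : Agree Inv v w X X') (hY : Agree Inv v w Y Y') :
    Agree Inv v w (rbComp G F X Y) (rbComp H F X' Y') := fun _ _ hm _ _ hd ↦
  ⟨hX.mem_rbComp hI hY hm hd, hX.symm.mem_rbComp hI.symm hY.symm hm.symm hd.symm_matched⟩

theorem eval (v : Fin c → Set (RbAtom G.V F.V)) (w : Fin c → Set (RbAtom H.V F.V))
    (s : RATerm c) : Agree Inv v w (s.eval (rbOps G F) v) (s.eval (rbOps H F) w) := by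
  induction s with
  | var t => exact fun _ _ hm _ _ ha ↦ hm.mem_iff hI ha t
  | bot => exact fun _ _ _ _ _ _ ↦ Iff.rfl
  | top => exact fun _ _ _ _ _ _ ↦ Iff.rfl
  | one' => exact fun _ _ _ _ _ ha ↦ ha.eq_id_iff
  | sup _ _ hs ht => exact fun _ _ hm _ _ ha ↦ or_congr (hs hm ha) (ht hm ha)
  | inf _ _ hs ht => exact fun _ _ hm _ _ ha ↦ and_congr (hs hm ha) (ht hm ha)
  | compl _ hs => exact fun _ _ hm _ _ ha ↦ not_congr (hs hm ha)
  | comp _ _ hs ht => exact hs.rbComp hI ht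
  | conv _ hs => exact fun _ _ hm _ _ ha ↦ hs hm ha.conv

theorem eq_of_eq (hX : Agree Inv v w X X') (hY : Agree Inv v w Y Y')
    (hm : Mirrors Inv v w g h) (heq : X' = Y') : X = Y := by
  ext a
  obtain ⟨g', h', a', hm', ha, -⟩ := hm.exists_corr hI .id a
  rw [hX hm' ha, hY hm' ha, heq]

end Agree

theorem Mirrors.sat_iff (hI : IsWinningInvariant G H (c + 3) Inv) (hm : Mirrors Inv v w g h)
    (φ : RAFormula c) : φ.Sat (rbOps G F) v ↔ φ.Sat (rbOps H F) w := by
  induction φ generalizing v w g h with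
  | eq s t =>
    have hs := Agree.eval hI v w s
    have ht := Agree.eval hI v w t
    exact ⟨hs.symm.eq_of_eq hI.symm ht.symm hm.symm, hs.eq_of_eq hI ht hm⟩
  | not _ ih => exact not_congr (ih hm)
  | and _ _ ihφ ihψ => exact and_congr (ihφ hm) (ihψ hm)
  | ex t _ ih =>
    constructor
    · rintro ⟨x, hx⟩
      obtain ⟨T, hT⟩ := hI.moveG hm.inv (liftCol t) (greenPart x)
      exact ⟨_, (ih (hm.update hT)).1 hx⟩
    · rintro ⟨x, hx⟩
      obtain ⟨T, hT⟩ := hI.moveH hm.inv (liftCol t) (greenPart x)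
      exact ⟨_, (ih (hm.symm.update hT).symm).2 hx⟩

end Mirrors

/-! ## Representations of rainbow algebras from homogeneity -/

/-- Every partial homomorphism between two-element subsets extends to a homomorphism. -/
def TwoPointExtendable (H F : BinStruct σ) : Prop :=
  ∀ ⦃i i' : H.V⦄ ⦃j j' : F.V⦄, i ≠ i' → PartialHom2 H F i i' j j' →
    ∃ f, IsHom H F f ∧ f i = j ∧ f i' = j'

theorem IsHom.partialHom2 {H F : BinStruct σ} {f : H.V → F.V} (hf : IsHom H F f) {i i' : H.V}
    (hne : i ≠ i') : PartialHom2 H F i i' (f i) (f i') :=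
  fun b ↦ ⟨hf b i i' hne, hf b i' i hne.symm⟩

section Cones

open AtomStructure.Network

variable {H F : BinStruct σ} {hHF : PairwiseMappable H F} {N : (rainbow H F hHF).Network}
  {x y u w w' p q : ℕ} {i i' : H.V}

/-- The node `w` is an apex with tint `i` of the cone over `(x, y)`: it is joined to `x` by
`green i` and to `y` by yellow. -/
def IsApex (N : (rainbow H F hHF).Network) (x y : ℕ) (i : H.V) (w : ℕ) : Prop :=
  w < N.size ∧ N.label x w = .green i ∧ N.label w y = .yellow

/-- The reds between the apices of the cone over `(x, y)` are read off from the homomorphism `f`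
of the tints. -/
def IsConeHom (N : (rainbow H F hHF).Network) (x y : ℕ) (f : H.V → F.V) : Prop :=
  IsHom H F f ∧ ∀ i i' w w', IsApex N x y i w → IsApex N x y i' w' → w ≠ w' →
    N.label w w' = .red (f i) (f i')

/-- The networks all of whose cones carry a homomorphism from `H` to `F`. This is the invariant
maintained in the step-by-step construction of a representation of `B_{H,F}`. -/
def HasConeHoms (N : (rainbow H F hHF).Network) : Prop :=
  ∀ x < N.size, ∀ y < N.size, ∃ f, IsConeHom N x y f

theorem label_ne_id (hu : u < N.size) (hw : w < N.size) (hne : u ≠ w) : N.label u w ≠ .id :=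
  mt (N.label_eq_one_iff hu hw).1 hne

theorem IsApex.tint_unique (h : IsApex N x y i w) (h' : IsApex N x y i' w) : i = i' :=
  RbAtom.green.inj (h.2.1.symm.trans h'.2.1)

theorem IsApex.ne_left (h : IsApex N x y i w) : w ≠ x := by
  rintro rfl
  exact nomatch (N.label_self h.1).symm.trans h.2.1

theorem IsApex.ne_right (h : IsApex N x y i w) : w ≠ y := by
  rintro rfl
  exact nomatch (N.label_self h.1).symm.trans h.2.2

theorem IsApex.exists_eq_red (hx : x < N.size) (hy : y < N.size) (hw : IsApex N x y i w)
    (hw' : IsApex N x y i' w') (hne : w ≠ w') :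
    ∃ j j', N.label w w' = .red j j' ∧ i ≠ i' ∧ PartialHom2 H F i i' j j' := by
  refine exists_eq_red_of_consistent (label_ne_id hw.1 hw'.1 hne) ?_ ?_
  · have h := N.tri hw.1 hx hw'.1
    rwa [N.label_swap hx hw.1, hw.2.1, hw'.2.1, rainbow_tri] at h
  · have h := N.tri hw.1 hy hw'.1
    rwa [N.label_swap hw'.1 hy, hw.2.2, hw'.2.2, rainbow_tri] at h

theorem exists_isConeHom_of_forall_isApex (hext : TwoPointExtendable H F)
    (hhom : ∃ f, IsHom H F f) (hx : x < N.size) (hy : y < N.size)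
    (hpq : ∀ i w, IsApex N x y i w → w = p ∨ w = q) : ∃ f, IsConeHom N x y f := by
  by_cases h : ∃ i i' w w', IsApex N x y i w ∧ IsApex N x y i' w' ∧ w ≠ w'
  · obtain ⟨i, i', w, w', hw, hw', hne⟩ := h
    obtain ⟨j, j', hred, hii', hj⟩ := hw.exists_eq_red hx hy hw' hne
    obtain ⟨f, hf, rfl, rfl⟩ := hext hii' hj
    refine ⟨f, hf, fun k k' u u' hu hu' huu' ↦ ?_⟩
    have huw : u = w ∧ u' = w' ∨ u = w' ∧ u' = w := by
      have := hpq _ _ hw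
      have := hpq _ _ hw'
      have := hpq _ _ hu
      have := hpq _ _ hu'
      omega
    obtain ⟨rfl, rfl⟩ | ⟨rfl, rfl⟩ := huw
    · rw [hu.tint_unique hw, hu'.tint_unique hw', hred]
    · rw [hu.tint_unique hw', hu'.tint_unique hw, N.label_swap hu'.1 hu.1, hred]
      rfl
  · obtain ⟨f, hf⟩ := hhom
    exact ⟨f, hf, fun i i' w w' hw hw' hne ↦ (h ⟨i, i', w, w', hw, hw', hne⟩).elim⟩

variable {a b : RbAtom H.V F.V} {f : H.V → F.V} {L : ℕ → RbAtom H.V F.V}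

/-- Labels `L w` for the edges from the nodes `w` of `N` to a new node `z` with `(x, z)` labelled
`a` and `(y, z)` labelled `b`. Reds occur only if `z` becomes an apex of the cone over `(x, y)`, and
then only at the other apices, where they follow the homomorphism `f`. -/
structure IsConeExtension (N : (rainbow H F hHF).Network) (x y : ℕ) (a b : RbAtom H.V F.V)
    (f : H.V → F.V) (L : ℕ → RbAtom H.V F.V) : Prop where
  consistent_left : ∀ w < N.size, Consistent H F (N.label w x) a (L w)
  consistent_right : ∀ w < N.size, Consistent H F (N.label w y) b (L w)
  eq_or : ∀ w < N.size, w = x ∨ w = y ∨ L w = .black ∨ L w = .white ∨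
    ∃ i i', a = .green i ∧ b = .yellow ∧ IsApex N x y i' w ∧ L w = .red (f i') (f i)

theorem exists_outer_label (hadm : N.Admits x y a b) (hwit : ¬N.Witnessed x y a b)
    (hab : ∀ i, ¬(a = .yellow ∧ b = .green i)) (hf : IsHom H F f) (hw : w < N.size)
    (hwx : w ≠ x) (hwy : w ≠ y) : ∃ l, Consistent H F (N.label w x) a l ∧
      Consistent H F (N.label w y) b l ∧ (l = .black ∨ l = .white ∨
        ∃ i i', a = .green i ∧ b = .yellow ∧ IsApex N x y i' w ∧ l = .red (f i') (f i)) := by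
  have ha := hadm.left_ne_one hwit
  have hb := hadm.right_ne_one hwit
  obtain ⟨hx, hy, -⟩ := hadm
  obtain h | h | ⟨i', i, ⟨⟨hwi, rfl⟩, hwy, rfl⟩ | ⟨⟨-, rfl⟩, -, rfl⟩⟩ :=
    consistent_black_or_white_or_cone (G := H) (H := F) (label_ne_id hw hx hwx) ha
      (label_ne_id hw hy hwy) hb
  · exact ⟨.black, h.1, h.2, .inl rfl⟩
  · exact ⟨.white, h.1, h.2, .inr (.inl rfl)⟩
  · have hxw : N.label x w = .green i' := by
      rw [N.label_swap hw hx, hwi]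
      rfl
    have hne : i' ≠ i := by
      rintro rfl
      refine hwit ⟨hx, hy, w, hw, hxw, ?_⟩
      rw [N.label_swap hw hy, hwy]
      rfl
    refine ⟨.red (f i') (f i), ?_, ?_, .inr (.inr ⟨i, i', rfl, rfl, ⟨hw, hxw, hwy⟩, rfl⟩)⟩
    · rw [hwi]
      exact ⟨hne, hf.partialHom2 hne⟩
    · rw [hwy]
      trivial
  · exact (hab _ ⟨rfl, rfl⟩).elim

theorem exists_isConeExtension (hadm : N.Admits x y a b) (hwit : ¬N.Witnessed x y a b)
    (hab : ∀ i, ¬(a = .yellow ∧ b = .green i)) (hf : IsHom H F f) :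
    ∃ L, IsConeExtension N x y a b f L := by
  have h : ∀ w, ∃ l, w < N.size → Consistent H F (N.label w x) a l ∧
      Consistent H F (N.label w y) b l ∧ (w = x ∨ w = y ∨ l = .black ∨ l = .white ∨
        ∃ i i', a = .green i ∧ b = .yellow ∧ IsApex N x y i' w ∧ l = .red (f i') (f i)) := by
    intro w
    by_cases hwx : w = x
    · subst hwx
      refine ⟨a, fun hw ↦ ⟨?_, rainbow_tri.1 hadm.2.2, .inl rfl⟩⟩
      rw [N.label_self hw]
      exact consistent_id_left.2 rfl
    by_cases hwy : w = y
    · subst hwy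
      refine ⟨b, fun hw ↦ ⟨rainbow_tri.1 hadm.swap.2.2, ?_, .inr (.inl rfl)⟩⟩
      rw [N.label_self hw]
      exact consistent_id_left.2 rfl
    by_cases hw : w < N.size
    · obtain ⟨l, hl, hl', h⟩ := exists_outer_label hadm hwit hab hf hw hwx hwy
      exact ⟨l, fun _ ↦ ⟨hl, hl', .inr (.inr h)⟩⟩
    · exact ⟨.id, fun h ↦ (hw h).elim⟩
  choose L hL using h
  exact ⟨L, fun w hw ↦ (hL w hw).1, fun w hw ↦ (hL w hw).2.1, fun w hw ↦ (hL w hw).2.2⟩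

theorem consistent_of_black_or_white_or_red {a b c : RbAtom H.V F.V} (ha : a ≠ .id)
    (hb : b = .black ∨ b = .white ∨ ∃ j j', b = .red j j')
    (hc : c = .black ∨ c = .white ∨ ∃ j j', c = .red j j')
    (hred : (∃ j j', b = .red j j') → (∃ j j', c = .red j j') → Consistent H F a b c) :
    Consistent H F a b c := by
  by_cases h : (∃ j j', b = .red j j') ∧ ∃ j j', c = .red j j'
  · exact hred h.1 h.2
  clear hred
  obtain rfl | rfl | ⟨j, j', rfl⟩ := hb <;> obtain rfl | rfl | ⟨k, k', rfl⟩ := hc <;>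
    cases a <;> simp [Consistent] at ha h ⊢

namespace IsConeExtension

variable (hL : IsConeExtension N x y a b f L)

include hL

theorem apply_left (hx : x < N.size) : L x = a := by
  have h := hL.consistent_left x hx
  rw [N.label_self hx] at h
  exact (consistent_id_left.1 h).symm

theorem apply_right (hy : y < N.size) : L y = b := by
  have h := hL.consistent_right y hy
  rw [N.label_self hy] at h
  exact (consistent_id_left.1 h).symm

theorem ne_id (ha : a ≠ .id) (hb : b ≠ .id) (hx : x < N.size) (hy : y < N.size)
    (hw : w < N.size) : L w ≠ .id := by
  obtain rfl | rfl | h | h | ⟨i, i', -, -, -, h⟩ := hL.eq_or w hw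
  · rwa [hL.apply_left hx]
  · rwa [hL.apply_right hy]
  all_goals
    rw [h]
    nofun

theorem eq_or_eq_of_eq_green (hw : w < N.size) (h : L w = .green i) : w = x ∨ w = y := by
  obtain hw | hw | h' | h' | ⟨i, i', -, -, -, h'⟩ := hL.eq_or w hw
  · exact .inl hw
  · exact .inr hw
  all_goals exact nomatch h'.symm.trans h

theorem eq_or_eq_of_eq_yellow (hw : w < N.size) (h : L w = .yellow) : w = x ∨ w = y := by
  obtain hw | hw | h' | h' | ⟨i, i', -, -, -, h'⟩ := hL.eq_or w hw
  · exact .inl hw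
  · exact .inr hw
  all_goals exact nomatch h'.symm.trans h

theorem exists_apex_of_eq_red (hw : w < N.size) (hwx : w ≠ x) (hwy : w ≠ y) {j j' : F.V}
    (h : L w = .red j j') : ∃ i i', a = .green i ∧ b = .yellow ∧ IsApex N x y i' w ∧
      L w = .red (f i') (f i) := by
  obtain hw | hw | h' | h' | h' := hL.eq_or w hw
  · exact (hwx hw).elim
  · exact (hwy hw).elim
  · exact nomatch h'.symm.trans h
  · exact nomatch h'.symm.trans h
  · exact h'

theorem black_or_white_or_red (hw : w < N.size) (hwx : w ≠ x) (hwy : w ≠ y) :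
    L w = .black ∨ L w = .white ∨ ∃ j j', L w = .red j j' :=
  ((hL.eq_or w hw).resolve_left hwx |>.resolve_left hwy).imp_right <| .imp_right
    fun ⟨_, _, _, _, _, h⟩ ↦ ⟨_, _, h⟩

theorem eq_and_eq_of_eq_green_yellow (hx : x < N.size) (hy : y < N.size)
    (hab : ∀ i, ¬(a = .yellow ∧ b = .green i)) (hu : u < N.size) (hw : w < N.size)
    (hLu : L u = .green i) (hLw : L w = .yellow) : u = x ∧ w = y := by
  have hux := hL.eq_or_eq_of_eq_green hu hLu
  have hwy := hL.eq_or_eq_of_eq_yellow hw hLw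
  have huw : u ≠ w := by
    rintro rfl
    exact nomatch hLu.symm.trans hLw
  have hswap : ¬(u = y ∧ w = x) := by
    rintro ⟨rfl, rfl⟩
    exact hab i ⟨(hL.apply_left hx).symm.trans hLw, (hL.apply_right hy).symm.trans hLu⟩
  omega

/-- Two red labels of the new edges are consistent since the labels of `N` between the apices of
the cone follow `f` as well. -/
theorem tri (hf : IsConeHom N x y f) (hx : x < N.size) (hy : y < N.size) (hu : u < N.size)
    (hw : w < N.size) : (rainbow H F hHF).tri (N.label u w) (L w) (L u) := by
  rw [rainbow_tri]
  obtain rfl | huw := eq_or_ne u w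
  · rw [N.label_self hu]
    exact consistent_id_left.2 rfl
  obtain rfl | hux := eq_or_ne u x
  · rw [hL.apply_left hx, N.label_swap hw hx]
    exact (hL.consistent_left w hw).conv_left
  obtain rfl | huy := eq_or_ne u y
  · rw [hL.apply_right hy, N.label_swap hw hy]
    exact (hL.consistent_right w hw).conv_left
  obtain rfl | hwx := eq_or_ne w x
  · rw [hL.apply_left hx]
    exact hL.consistent_left u hu
  obtain rfl | hwy := eq_or_ne w y
  · rw [hL.apply_right hy]
    exact hL.consistent_right u hu
  refine consistent_of_black_or_white_or_red (label_ne_id hu hw huw)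
    (hL.black_or_white_or_red hw hwx hwy) (hL.black_or_white_or_red hu hux huy) ?_
  rintro ⟨_, _, hw'⟩ ⟨_, _, hu'⟩
  obtain ⟨i, k, rfl, -, hapexw, hLw⟩ := hL.exists_apex_of_eq_red hw hwx hwy hw'
  obtain ⟨_, k', ⟨⟩, -, hapexu, hLu⟩ := hL.exists_apex_of_eq_red hu hux huy hu'
  rw [hf.2 k' k u w hapexu hapexw huw, hLw, hLu]
  exact ⟨rfl, rfl, rfl⟩

end IsConeExtension

section Extend

variable {hne : ∀ u < N.size, L u ≠ (rainbow H F hHF).one}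
  {htri : ∀ u < N.size, ∀ v < N.size, (rainbow H F hHF).tri (N.label u v) (L v) (L u)}

theorem isApex_extend_old (hx : x < N.size) (hy : y < N.size) (hw : w < N.size) :
    IsApex (N.extend L hne htri) x y i w ↔ IsApex N x y i w := by
  simp only [IsApex, extend, extendLabel_old, hx, hy, hw, Nat.lt_succ_of_lt]

theorem isApex_extend_size (hx : x < N.size) (hy : y < N.size) :
    IsApex (N.extend L hne htri) x y i N.size ↔ L x = .green i ∧ L y = .yellow := by
  simp only [IsApex, extend, extendLabel_size_right hx, extendLabel_size_left hy, Nat.lt_succ_self,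
    true_and]
  exact and_congr_right fun _ ↦ RbAtom.conv_injective.eq_iff (b := .yellow)

theorem eq_green_of_isApex_extend (hw : IsApex (N.extend L hne htri) N.size y i w) :
    w < N.size ∧ L w = .green i := by
  obtain hlt | rfl := Nat.lt_succ_iff_lt_or_eq.1 hw.1
  · exact ⟨hlt, RbAtom.conv_injective ((extendLabel_size_left hlt).symm.trans hw.2.1)⟩
  · exact (hw.ne_left rfl).elim

theorem eq_yellow_of_isApex_extend (hw : IsApex (N.extend L hne htri) x N.size i w) :
    w < N.size ∧ L w = .yellow := by
  obtain hlt | rfl := Nat.lt_succ_iff_lt_or_eq.1 hw.1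
  · exact ⟨hlt, (extendLabel_size_right hlt).symm.trans hw.2.2⟩
  · exact (hw.ne_right rfl).elim

theorem IsConeHom.extend (hf : IsConeHom N x y f) (hx : x < N.size) (hy : y < N.size)
    (hnew : ∀ i i' w, IsApex (N.extend L hne htri) x y i N.size → IsApex N x y i' w →
      L w = .red (f i') (f i)) : IsConeHom (N.extend L hne htri) x y f := by
  refine ⟨hf.1, fun i i' w w' hw hw' hww' ↦ ?_⟩
  rcases Nat.lt_succ_iff_lt_or_eq.1 hw.1 with hlt | rfl <;>
    rcases Nat.lt_succ_iff_lt_or_eq.1 hw'.1 with hlt' | rfl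
  · rw [isApex_extend_old hx hy hlt] at hw
    rw [isApex_extend_old hx hy hlt'] at hw'
    exact (extendLabel_old hlt hlt').trans (hf.2 i i' w w' hw hw' hww')
  · rw [isApex_extend_old hx hy hlt] at hw
    exact (extendLabel_size_right hlt).trans (hnew i' i w hw' hw)
  · rw [isApex_extend_old hx hy hlt'] at hw'
    refine (extendLabel_size_left hlt').trans ?_
    rw [hnew i i' w' hw hw']
    rfl
  · exact (hww' rfl).elim

theorem IsConeExtension.isConeHom_extend (hL : IsConeExtension N x y a b f L)
    (hf : IsConeHom N x y f) (hx : x < N.size) (hy : y < N.size) :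
    IsConeHom (N.extend L hne htri) x y f := by
  refine hf.extend hx hy fun i i' w hnew hw ↦ ?_
  have hw' := (isApex_extend_old (hne := hne) (htri := htri) hx hy hw.1).2 hw
  obtain ⟨j, j', hred, -⟩ :=
    hw'.exists_eq_red (Nat.lt_succ_of_lt hx) (Nat.lt_succ_of_lt hy) hnew hw.1.ne
  replace hred : L w = .red j j' := (extendLabel_size_right hw.1).symm.trans hred
  obtain ⟨k, k', rfl, -, hk', hLw⟩ := hL.exists_apex_of_eq_red hw.1 hw.ne_left hw.ne_right hred
  have hk : k = i := RbAtom.green.inj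
    ((hL.apply_left hx).symm.trans ((isApex_extend_size hx hy).1 hnew).1)
  rw [hLw, hk, hk'.tint_unique hw]

theorem IsConeExtension.hasConeHoms_extend (hL : IsConeExtension N x y a b f L)
    (hext : TwoPointExtendable H F) (hN : HasConeHoms N) (hf : IsConeHom N x y f)
    (hx : x < N.size) (hy : y < N.size) (hab : ∀ i, ¬(a = .yellow ∧ b = .green i)) :
    HasConeHoms (N.extend L hne htri) := by
  intro x' hx' y' hy'
  obtain hltx | rfl := Nat.lt_succ_iff_lt_or_eq.1 hx'
  · obtain hlty | rfl := Nat.lt_succ_iff_lt_or_eq.1 hy'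
    · by_cases hnew : ∃ i, IsApex (N.extend L hne htri) x' y' i N.size
      · obtain ⟨i, hi⟩ := hnew
        obtain ⟨hLx, hLy⟩ := (isApex_extend_size hltx hlty).1 hi
        obtain ⟨rfl, rfl⟩ := hL.eq_and_eq_of_eq_green_yellow hx hy hab hltx hlty hLx hLy
        exact ⟨f, hL.isConeHom_extend hf hx hy⟩
      · obtain ⟨f', hf'⟩ := hN x' hltx y' hlty
        exact ⟨f', hf'.extend hltx hlty fun i _ _ hi ↦ (hnew ⟨i, hi⟩).elim⟩
    · exact exists_isConeHom_of_forall_isApex hext ⟨f, hf.1⟩ hx' hy' fun i w hw ↦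
        let ⟨hlt, h⟩ := eq_yellow_of_isApex_extend hw
        hL.eq_or_eq_of_eq_yellow hlt h
  · exact exists_isConeHom_of_forall_isApex hext ⟨f, hf.1⟩ hx' hy' fun i w hw ↦
      let ⟨hlt, h⟩ := eq_green_of_isApex_extend hw
      hL.eq_or_eq_of_eq_green hlt h

end Extend

theorem HasConeHoms.exists_witnessed_of_ne (hN : HasConeHoms N) (hext : TwoPointExtendable H F)
    (hadm : N.Admits x y a b) (hwit : ¬N.Witnessed x y a b)
    (hab : ∀ i, ¬(a = .yellow ∧ b = .green i)) :
    ∃ N', HasConeHoms N' ∧ N ≤ N' ∧ N'.Witnessed x y a b := by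
  obtain ⟨hx, hy, -⟩ := id hadm
  obtain ⟨f, hf⟩ := hN x hx y hy
  obtain ⟨L, hL⟩ := exists_isConeExtension hadm hwit hab hf.1
  have hne : ∀ w < N.size, L w ≠ .id := fun w ↦
    hL.ne_id (hadm.left_ne_one hwit) (hadm.right_ne_one hwit) hx hy
  have htri : ∀ u < N.size, ∀ w < N.size, (rainbow H F hHF).tri (N.label u w) (L w) (L u) :=
    fun u hu w ↦ hL.tri hf hx hy hu
  refine ⟨N.extend L hne htri, hL.hasConeHoms_extend hext hN hf hx hy hab,
    le_extend hne htri, Nat.lt_succ_of_lt hx, Nat.lt_succ_of_lt hy, N.size,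
    Nat.lt_succ_self _, ?_, ?_⟩
  · exact (extendLabel_size_right hx).trans (hL.apply_left hx)
  · exact (extendLabel_size_right hy).trans (hL.apply_right hy)

theorem HasConeHoms.exists_witnessed (hN : HasConeHoms N) (hext : TwoPointExtendable H F)
    (hadm : N.Admits x y a b) : ∃ N', HasConeHoms N' ∧ N ≤ N' ∧ N'.Witnessed x y a b := by
  by_cases hwit : N.Witnessed x y a b
  · exact ⟨N, hN, le_rfl, hwit⟩
  by_cases hab : ∃ i, a = .yellow ∧ b = .green i
  · have hba : ∀ i, ¬(b = .yellow ∧ a = .green i) := by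
      rintro i ⟨-, rfl⟩
      exact nomatch hab
    obtain ⟨N', hN', hle, hwit'⟩ :=
      hN.exists_witnessed_of_ne hext hadm.swap (fun h ↦ hwit h.swap) hba
    exact ⟨N', hN', hle, hwit'.swap⟩
  · exact hN.exists_witnessed_of_ne hext hadm hwit (not_exists.1 hab)

theorem hasConeHoms_single (hhom : ∃ f, IsHom H F f) :
    HasConeHoms (single (rainbow H F hHF)) := by
  obtain ⟨f, hf⟩ := hhom
  exact fun x _ y _ ↦ ⟨f, hf, fun i _ w _ hw _ _ ↦ nomatch hw.2.1⟩

theorem representable_rainbow [Countable H.V] [Countable F.V] (hext : TwoPointExtendable H F)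
    (hhom : ∃ f, IsHom H F f) : @Representable _ (rainbow H F hHF).complexAlgebra :=
  representable_of_forall_exists_witnessed (𝒦 := {N | HasConeHoms N})
    ⟨_, hasConeHoms_single hhom, Nat.one_pos⟩
    fun _ hN _ _ _ _ hadm ↦ HasConeHoms.exists_witnessed hN hext hadm

end Cones

/-! ## Failure of axiomatisability in `c` variables -/

theorem IsWinningInvariant.not_axiomatises_representable {G H F : BinStruct σ} {c : ℕ}
    [Countable H.V] [Finite F.V] {Inv : (Fin (c + 3) → Set G.V) → (Fin (c + 3) → Set H.V) → Prop}
    (hI : IsWinningInvariant G H (c + 3) Inv) (h0 : Inv (fun _ ↦ ∅) fun _ ↦ ∅)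
    (hext : TwoPointExtendable H F) (hHF : ∃ f, IsHom H F f) (hGF : ¬∃ f, IsHom G F f)
    (T : Set (RAFormula c)) : ¬∀ (A : Type) [RelationAlgebra A],
      (Representable A ↔ ∀ φ ∈ T, RAFormula.Sat (RAOps.ofClass A) (fun _ ↦ ⊥) φ) := by
  intro hT
  obtain ⟨f, hf⟩ := id hHF
  have pairH : PairwiseMappable H F := fun _ _ hne ↦ ⟨_, _, hf.partialHom2 hne⟩
  have pairG : PairwiseMappable G F := hI.pairwiseMappable h0 pairH
  obtain ⟨i⟩ : Nonempty G.V := by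
    by_contra hG
    rw [not_nonempty_iff] at hG
    exact hGF ⟨hG.elim, fun _ ↦ hG.elim⟩
  obtain ⟨k, -⟩ := hI.exists_same_colours h0 i
  have : Nonempty F.V := ⟨f k⟩
  have hsat : ∀ φ ∈ T, φ.Sat (rbOps H F) fun _ ↦ ∅ :=
    (@hT _ (rainbow H F pairH).complexAlgebra).1 (representable_rainbow hext hHF)
  have hm : Mirrors Inv (fun _ ↦ (∅ : Set (RbAtom G.V F.V))) (fun _ ↦ ∅) (fun _ ↦ ∅) fun _ ↦ ∅ := by
    refine ⟨h0, fun _ ↦ ?_, fun _ ↦ ?_⟩ <;> ext a <;> cases a <;> rfl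
  exact hGF <| exists_isHom_of_representable <| (@hT _ (rainbow G F pairG).complexAlgebra).2
    fun φ hφ ↦ (hm.sat_iff hI φ).2 (hsat φ hφ)

namespace Digraph'

variable {G H : Digraph'}

/-- A digraph as a binary structure with an edge predicate (`true`) and a non-edge predicate
(`false`), both irreflexive, so that homomorphisms are embeddings. -/
abbrev toBinStruct (G : Digraph') : BinStruct Bool where
  V := G.V
  rel b u v := u ≠ v ∧ (G.E u v ↔ b = true)

theorem forall_rel_imp_iff {u v : G.V} {u' v' : H.V} (huv : u ≠ v) :
    (∀ b, G.toBinStruct.rel b u v → H.toBinStruct.rel b u' v') ↔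
      u' ≠ v' ∧ (G.E u v ↔ H.E u' v') := by
  by_cases h : G.E u v <;> simp [huv, h]

theorem isHom_toBinStruct_iff {f : G.V → H.V} :
    IsHom G.toBinStruct H.toBinStruct f ↔ IsDigraphEmbedding G H f := by
  have h : IsHom G.toBinStruct H.toBinStruct f ↔
      ∀ u v : G.V, u ≠ v → f u ≠ f v ∧ (G.E u v ↔ H.E (f u) (f v)) := by
    refine ⟨fun h u v huv ↦ (forall_rel_imp_iff huv).1 fun b ↦ h b u v huv, fun h b u v huv ↦ ?_⟩
    exact (forall_rel_imp_iff huv).2 (h u v huv) b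
  rw [h]
  exact ⟨fun h ↦ ⟨fun u v ↦ not_imp_not.1 fun huv ↦ (h u v huv).1, fun u v huv ↦ (h u v huv).2⟩,
    fun h u v huv ↦ ⟨h.1.ne huv, h.2 u v huv⟩⟩

theorem twoPointExtendable_toBinStruct
    (h : ∀ u v u' v' : H.V, u ≠ v → u' ≠ v' → (H.E u v ↔ H.E u' v') → (H.E v u ↔ H.E v' u') →
      ∃ f, IsDigraphEmbedding H H f ∧ f u = u' ∧ f v = v') :
    TwoPointExtendable H.toBinStruct H.toBinStruct := by
  intro u v u' v' huv hpart
  obtain ⟨hne, hE⟩ := (forall_rel_imp_iff huv).1 fun b ↦ (hpart b).1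
  obtain ⟨-, hE'⟩ := (forall_rel_imp_iff huv.symm).1 fun b ↦ (hpart b).2
  obtain ⟨f, hf, hfuv⟩ := h u v u' v' huv hne hE hE'
  exact ⟨f, isHom_toBinStruct_iff.2 hf, hfuv⟩

end Digraph'

/-- `∃` has a winning strategy in the unmodified infinitely long `c`-colour colouring game
on digraphs `(G,H)`, starting from the uncoloured position. -/
def ExSurvivesD (G H : Digraph') (c : ℕ) : Prop :=
  ∃ Inv : (Fin c → Set G.V) → (Fin c → Set H.V) → Prop,
    Inv (fun _ ↦ ∅) (fun _ ↦ ∅) ∧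
    (∀ g h, Inv g h → ¬ColWinD G H c g h) ∧
    (∀ g h, Inv g h → ∀ (t : Fin c) (S : Set G.V), ∃ T : Set H.V,
        Inv (Function.update g t S) (Function.update h t T)) ∧
    (∀ g h, Inv g h → ∀ (t : Fin c) (T : Set H.V), ∃ S : Set G.V,
        Inv (Function.update g t S) (Function.update h t T))

theorem ExSurvivesModD.exSurvivesD {G H : Digraph'} {c : ℕ} (h : ExSurvivesModD G H c) :
    ExSurvivesD G H c :=
  h.imp fun _ ⟨h0, hwin, hmove⟩ ↦ ⟨h0, fun g h hgh hcol ↦ hwin g h hgh (.inl hcol), hmove⟩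

section ColWinD

variable {G H : Digraph'} {c : ℕ} {g : Fin c → Set G.V} {h : Fin c → Set H.V}

theorem paletteSet_nonempty_iff_of_not_colWinD (hwin : ¬ColWinD G H c g h) (π : Set (Fin c)) :
    (PaletteSet g π).Nonempty ↔ (PaletteSet h π).Nonempty := by
  have hπ := not_exists.1 (not_or.1 hwin).1 π
  rw [Set.nonempty_iff_ne_empty, Set.nonempty_iff_ne_empty]
  exact not_congr ((not_xor _ _).1 hπ)

theorem edge_iff_of_not_colWinD (hwin : ¬ColWinD G H c g h) {π π' : Set (Fin c)} {i i' : G.V}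
    {k k' : H.V} (hi : PaletteSet g π = {i}) (hk : PaletteSet h π = {k})
    (hi' : PaletteSet g π' = {i'}) (hk' : PaletteSet h π' = {k'}) : G.E i i' ↔ H.E k k' := by
  have hππ' := (not_xor _ _).1 fun hx ↦ (not_or.1 hwin).2 ⟨π, π', hx⟩
  simpa [hi, hk, hi', hk', not_iff_not] using hππ'

theorem eq_of_paletteSet_eq_singleton {V W : Type} {g : Fin c → Set V} {h : Fin c → Set W}
    {π π' : Set (Fin c)} {i i' : V} {k k' : W} (hi : PaletteSet g π = {i})
    (hk : PaletteSet h π = {k}) (hi' : PaletteSet g π' = {i'}) (hk' : PaletteSet h π' = {k'})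
    (hii' : i = i') : k = k' := by
  have hiπ : i ∈ PaletteSet g π := hi ▸ rfl
  have hiπ' : i ∈ PaletteSet g π' := hi' ▸ hii'
  obtain rfl : π = π' := Set.ext fun t ↦ (hiπ t).symm.trans (hiπ' t)
  exact Set.singleton_injective (hk.symm.trans hk')

theorem ExSurvivesD.exists_isWinningInvariant (hGH : ExSurvivesD G H c) :
    ∃ Inv, IsWinningInvariant G.toBinStruct H.toBinStruct c Inv ∧
      Inv (fun _ ↦ ∅) fun _ ↦ ∅ := by
  obtain ⟨Inv, h0, hwin, moveG, moveH⟩ := hGH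
  refine ⟨Inv, ⟨?_, ?_, moveG, moveH⟩, h0⟩
  · exact fun g h hgh ↦ paletteSet_nonempty_iff_of_not_colWinD (hwin g h hgh)
  · exact fun g h hgh π π' i i' k k' hi hk hi' hk' b ↦
      and_congr (not_congr ⟨eq_of_paletteSet_eq_singleton hi hk hi' hk',
        eq_of_paletteSet_eq_singleton hk hi hk' hi'⟩)
        (iff_congr (edge_iff_of_not_colWinD (hwin g h hgh) hi hk hi' hk') Iff.rfl)

end ColWinD

theorem rra_not_c_variable_axiomatisable_digraph_general (G H : Digraph') [Finite H.V] (c : ℕ)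
    (h1 : ExSurvivesD G H (c + 3))
    (h2 : ∀ u v u' v' : H.V, u ≠ v → u' ≠ v' → (H.E u v ↔ H.E u' v') → (H.E v u ↔ H.E v' u') →
      ∃ f, IsDigraphEmbedding H H f ∧ f u = u' ∧ f v = v')
    (h3 : ¬∃ f, IsDigraphEmbedding G H f) :
    ¬∃ T : Set (RAFormula c), (∀ φ ∈ T, φ.freeVars = ∅) ∧ ∀ (A : Type) [RelationAlgebra A],
      (Representable A ↔ ∀ φ ∈ T, RAFormula.Sat (RAOps.ofClass A) (fun _ ↦ ⊥) φ) := by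
  rintro ⟨T, -, hT⟩
  obtain ⟨Inv, hI, h0⟩ := h1.exists_isWinningInvariant
  have hGH : ¬∃ f, IsHom G.toBinStruct H.toBinStruct f :=
    fun ⟨f, hf⟩ ↦ h3 ⟨f, Digraph'.isHom_toBinStruct_iff.1 hf⟩
  have hid : IsHom H.toBinStruct H.toBinStruct id := fun _ _ _ _ h ↦ h
  exact hI.not_axiomatises_representable h0 (Digraph'.twoPointExtendable_toBinStruct h2) ⟨id, hid⟩
    hGH T hT

theorem rra_not_c_variable_axiomatisable_digraph (G H : Digraph')
    [Finite G.V] [Finite H.V] (c : ℕ)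
    (h1 : ExSurvivesModD G H (c + 3))
    (h2 : ∀ u v u' v' : H.V, u ≠ v → u' ≠ v' →
        (H.E u v ↔ H.E u' v') → (H.E v u ↔ H.E v' u') →
        ∃ f : H.V → H.V, Function.Bijective f ∧
          (∀ x y : H.V, x ≠ y → (H.E x y ↔ H.E (f x) (f y))) ∧ f u = u' ∧ f v = v')
    (h3 : ¬ ∃ f : G.V → H.V, IsDigraphEmbedding G H f) :
    ¬ ∃ T : Set (RAFormula c), (∀ φ ∈ T, φ.freeVars = ∅) ∧
        ∀ (A : Type) [RelationAlgebra A],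
          (Representable A ↔ ∀ φ ∈ T, RAFormula.Sat (RAOps.ofClass A) (fun _ => ⊥) φ) := by
  exact rra_not_c_variable_axiomatisable_digraph_general G H c h1.exSurvivesD
    (fun u v u' v' huv huv' hE hE' ↦ (h2 u v u' v' huv huv' hE hE').imp
      fun _ ⟨hf, hE, h⟩ ↦ ⟨⟨hf.injective, hE⟩, h⟩) h3

end Digraphs
end

section
/- Let G and H be binary structures, let N be an atomic network for the rainbow relation algebra B_{G,H}, and let C be a set of nodes of N with |C| ≥ 2 such that every edge of N between distinct nodes of C is labelled by a red atom. Then there is a function ρ: C → H such that N(z1,z2) = r_{ρ(z1),ρ(z2)} for all distinct z1, z2 ∈ C. -/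
variable {σ : Type}

section Networks


/-- An atomic network for the rainbow relation algebra `B_{G,H}`: a set of nodes
with edges labelled by atoms, such that reflexive edges are labelled by the
identity atom, reversed edges are labelled by converses, and no triangle is
labelled by a forbidden triple. -/
structure RbNetwork (G H : BinStruct σ) : Type 1 where
  node : Type
  lab : node → node → RbAtom G.V H.V
  lab_id : ∀ x : node, lab x x = RbAtom.id
  lab_conv : ∀ x y : node, lab y x = (lab x y).conv
  consistent : ∀ x y z : node, ¬ Forbidden G H (lab x y) (lab y z) (lab x z)

/-! In a consistent triangle of red edges, rule (IV) makes the two edges leaving a node share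
their first subscript. So along a red clique the first subscript of an edge depends only on its
source; as the converse of a red atom swaps subscripts, the second one is the value at the
target. -/

theorem not_forbidden_red_iff {G H : BinStruct σ} {a b c d e f : H.V} :
    ¬ Forbidden G H (.red a b) (.red c d) (.red e f) ↔ a = e ∧ b = c ∧ d = f := by
  constructor
  · intro h
    by_contra hne
    exact h ⟨_, _, _, .rrr a b c d e f hne, .inl rfl⟩
  · rintro ⟨rfl, rfl, rfl⟩ ⟨x, y, z, hbase, htransform⟩
    cases hbase <;> grind [RbAtom.conv]

namespace RbNetwork

variable {G H : BinStruct σ} {N : RbNetwork G H} {C : Set N.node} {x y z : N.node}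

theorem lab_swap_of_eq_red {j j' : H.V} (h : N.lab x y = .red j j') :
    N.lab y x = .red j' j := by
  rw [N.lab_conv, h, RbAtom.conv]

theorem subscripts_of_red_triangle {a b c d e f : H.V} (hxy : N.lab x y = .red a b)
    (hyz : N.lab y z = .red c d) (hxz : N.lab x z = .red e f) : a = e ∧ b = c ∧ d = f := by
  have h := N.consistent x y z
  rwa [hxy, hyz, hxz, not_forbidden_red_iff] at h

/-- A red clique of a network: a set of nodes whose distinct members are joined by edges with red
labels. Sets with at most one node are included. -/
def IsRedClique (N : RbNetwork G H) (C : Set N.node) : Prop :=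
  C.Pairwise fun x y ↦ ∃ j j' : H.V, N.lab x y = .red j j'

namespace IsRedClique

theorem fst_subscript_eq (hC : N.IsRedClique C) (hx : x ∈ C) (hy : y ∈ C) {a b c d : H.V}
    (hzx : N.lab z x = .red a b) (hzy : N.lab z y = .red c d) : a = c := by
  obtain rfl | hxy := eq_or_ne x y
  · exact (RbAtom.red.inj (hzx.symm.trans hzy)).1
  · obtain ⟨_, _, hlab⟩ := hC hx hy hxy
    exact (subscripts_of_red_triangle hzx hlab hzy).1

theorem exists_fst_subscript (hC : N.IsRedClique C) (hnt : C.Nontrivial) (hz : z ∈ C) :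
    ∃ j : H.V, ∀ x ∈ C, z ≠ x → ∃ j' : H.V, N.lab z x = .red j j' := by
  obtain ⟨y, hy, hyz⟩ := hnt.exists_ne z
  obtain ⟨j, _, hzy⟩ := hC hz hy hyz.symm
  refine ⟨j, fun x hx hzx ↦ ?_⟩
  obtain ⟨k, k', hlab⟩ := hC hz hx hzx
  obtain rfl : k = j := hC.fst_subscript_eq hx hy hlab hzy
  exact ⟨k', hlab⟩

end IsRedClique

end RbNetwork

theorem redClique_index {σ : Type} (G H : BinStruct σ) (N : RbNetwork G H)
    (C : Set N.node) (hC : ∃ z₁ ∈ C, ∃ z₂ ∈ C, z₁ ≠ z₂)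
    (hred : ∀ z₁ ∈ C, ∀ z₂ ∈ C, z₁ ≠ z₂ → ∃ j j' : H.V, N.lab z₁ z₂ = RbAtom.red j j') :
    ∃ ρ : C → H.V, ∀ z₁ z₂ : C, z₁ ≠ z₂ →
      N.lab z₁ z₂ = RbAtom.red (ρ z₁) (ρ z₂) := by
  have hclique : N.IsRedClique C := fun z₁ h₁ z₂ h₂ ↦ hred z₁ h₁ z₂ h₂
  choose ρ hρ using fun z : C ↦ hclique.exists_fst_subscript hC z.2
  refine ⟨ρ, fun z₁ z₂ hne ↦ ?_⟩
  have hne' : (z₁ : N.node) ≠ z₂ := Subtype.coe_ne_coe.mpr hne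
  obtain ⟨j, h₁₂⟩ := hρ z₁ z₂ z₂.2 hne'
  obtain ⟨k, h₂₁⟩ := hρ z₂ z₁ z₁.2 hne'.symm
  obtain ⟨rfl, -⟩ := RbAtom.red.inj ((RbNetwork.lab_swap_of_eq_red h₁₂).symm.trans h₂₁)
  exact h₁₂

end Networks
end
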